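/- Let U be a bounded connected open set in ℂ^m. Then there exist a sequence of injective holomorphic maps F_j : B^m(0,1) → U and numbers 0 < s_j < 1, j = 1,2,…, such that: (i) F_{j+1}(B^m(0,s_{j+1})) ⊇ F_j(B^m(0,s_j)) for all j ≥ 1, and (ii) vol(F_{j+1}(B^m(0,s_{j+1}))) ≥ vol(F_j(B^m(0,s_j))) + (ρ_m/(3·32^{2m}))·(vol(U) − vol(F_j(B^m(0,s_j)))) for all j ≥ 1. -/

import Mathlib

/-!
The image of a ball under a holomorphic embedding `F` can be enlarged by *blowing a bubble*. Suppose
a closed ball `closedBall q r ⊆ U` meets `F(closedBall 0 1)` only at a boundary point `F e`, and put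
`n = (q - F e) / r`. Add to `F` the term `K s / √u • n + K s / u • W (z⊥)`, where
`u = 1 + s² - ⟪e, z⟫`, `z⊥` is the part of `z` orthogonal to `e`, and `W` is a linear isometry
carrying `e^⊥` to `n^⊥`. As `s → 0` this term tends to `0` away from `e`, while near `e` it stays in
the ball of radius `r` about `r n` (`bubble_mem_ball`), hits the centre (`bubble_center`) and keeps
the unit sphere away from it (`bubble_sphere`). Hence the new image stays in `U`, almost contains the
old one, and contains a ball about `q` of radius comparable to `r` (`core`). Injectivity holds
because the bubble expands in directions compatible with the derivative `M` of `F` at `e`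
(`bubble_antilip`): as `q` is a nearest-point centre, `M` takes the outer normal component at `e` to
that along `n` (`normal_of_min`), and `W` is chosen by polar decomposition so that `M` has positive
real part relative to `W` on `e^⊥` (`exists_frame`). All maps are kept bi-Lipschitz from below
(`Good`), so that injectivity survives small perturbations.

If finitely many disjoint closed balls in `U` are given in the complement of `F(closedBall 0 s)`,
delete their concentric halves from `U`. The points which can be swallowed inside what is left form a
relatively clopen set, so by connectedness of `U` the image can be led into one of the balls
(`exists_reach`); one bubble then swallows its concentric `1/32`-shrinking, and one inducts on the
number of balls (`swallow_finset`, `geometric_step`).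

By Besicovitch's theorem finitely many disjoint closed balls fill half of the volume of
`U \ F(closedBall 0 s)` (`exists_finset_closedBall`), so each step gains at least the fraction
`1 / (2 · 32 ^ (2 m))` of the missing volume (`volume_step`). As `ρ_m ≤ 1`, this exceeds
`ρ_m / (3 · 32 ^ (2 m))`.
-/

open Metric MeasureTheory

noncomputable instance {m : ℕ} : MeasurableSpace (EuclideanSpace ℂ (Fin m)) := borel _
instance {m : ℕ} : BorelSpace (EuclideanSpace ℂ (Fin m)) := ⟨rfl⟩
noncomputable instance {m : ℕ} : InnerProductSpace ℝ (EuclideanSpace ℂ (Fin m)) :=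
  InnerProductSpace.rclikeToReal ℂ _

/-- Lebesgue measure on `ℂ^m ≅ ℝ^{2m}`. -/
noncomputable instance {m : ℕ} : MeasureSpace (EuclideanSpace ℂ (Fin m)) :=
  measureSpaceOfInnerProductSpace

/-- `ρ_m`: the ratio of the volume of a maximal ball inscribed in a cube of `ℝ^{2m}` to the
volume of the cube, i.e. the volume of a ball of radius `1/2` in `ℂ^m ≅ ℝ^{2m}` (the unit
cube having volume `1`). -/
noncomputable def rhoConst (m : ℕ) : ℝ :=
  (volume (ball (0 : EuclideanSpace ℂ (Fin m)) (1 / 2))).toReal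

/-! ### Planar estimates -/

namespace BallExhaustion

/-- Two complex numbers at an angle of at most `3π/4` do not cancel. -/
lemma norm_add_ge_of_sector {a w : ℂ} (ha : |a.im| ≤ a.re) (hw : 0 ≤ w.re) :
    (1 / 3) * (‖a‖ + ‖w‖) ≤ ‖a + w‖ := by
  have hA := norm_nonneg a
  have hB := norm_nonneg w
  have h1 : ‖a‖ ^ 2 = a.re ^ 2 + a.im ^ 2 := by
    rw [← Complex.normSq_eq_norm_sq, Complex.normSq_apply]; ring
  have h2 : ‖w‖ ^ 2 = w.re ^ 2 + w.im ^ 2 := by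
    rw [← Complex.normSq_eq_norm_sq, Complex.normSq_apply]; ring
  have h3 : ‖a + w‖ ^ 2 = ‖a‖ ^ 2 + ‖w‖ ^ 2 + 2 * (a.re * w.re + a.im * w.im) := by
    rw [h1, h2, ← Complex.normSq_eq_norm_sq, Complex.normSq_apply]
    simp only [Complex.add_re, Complex.add_im]; ring
  have h4 : 0 ≤ a.re := (abs_nonneg _).trans ha
  have h5 : |w.im| ≤ ‖w‖ := Complex.abs_im_le_norm w
  have h7 : a.im ^ 2 ≤ a.re ^ 2 := by
    rw [← sq_abs a.im]; exact pow_le_pow_left₀ (abs_nonneg _) ha 2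
  have h6 : |a.im| ≤ (3 / 4) * ‖a‖ := by
    apply abs_le_of_sq_le_sq _ (by positivity)
    nlinarith
  have h8 : -((3 / 4) * ‖a‖ * ‖w‖) ≤ a.im * w.im := by
    have : |a.im * w.im| ≤ (3 / 4) * ‖a‖ * ‖w‖ := by
      rw [abs_mul]; exact mul_le_mul h6 h5 (abs_nonneg _) (by positivity)
    exact (abs_le.mp this).1
  have h9 : 0 ≤ a.re * w.re := mul_nonneg h4 hw
  apply le_of_sq_le_sq _ (norm_nonneg _)
  rw [h3]
  nlinarith [sq_nonneg (‖a‖ - ‖w‖)]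

lemma sqrt_sq (u : ℂ) : u.sqrt ^ 2 = u := by
  rw [Complex.sqrt]; exact Complex.cpow_ofNat_inv_pow u 2

lemma sqrt_re_pos {u : ℂ} (hu : 0 < u.re) : 0 < u.sqrt.re := by
  rw [Complex.sqrt, Complex.cpow_inv_two_re]
  apply Real.sqrt_pos.mpr
  have := norm_nonneg u
  linarith

lemma sqrt_sector {u : ℂ} (hu : 0 < u.re) : |u.sqrt.im| ≤ u.sqrt.re := by
  have h := sqrt_sq u
  have h0 := sqrt_re_pos hu
  apply abs_le_of_sq_le_sq _ h0.le
  have : (u.sqrt ^ 2).re = u.re := by rw [h]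
  rw [pow_two, Complex.mul_re] at this
  nlinarith

lemma sqrt_norm_sq (u : ℂ) : ‖u.sqrt‖ ^ 2 = ‖u‖ := by
  rw [← norm_pow, sqrt_sq]

lemma sqrt_ne_zero {u : ℂ} (hu : 0 < u.re) : u.sqrt ≠ 0 := by
  intro h
  have := sqrt_re_pos hu
  simp [h] at this

lemma sector_mul_re {x y : ℂ} (hx : |x.im| ≤ x.re) (hy : |y.im| ≤ y.re) : 0 ≤ (x * y).re := by
  rw [Complex.mul_re]
  have : |x.im * y.im| ≤ x.re * y.re := by
    rw [abs_mul]
    exact mul_le_mul hx hy (abs_nonneg _) ((abs_nonneg _).trans hx)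
  have := (abs_le.mp this).2
  linarith

/-- With `x = √u`, the planar map `u ↦ b u - k / √u` expands distances on the right half-plane: the
increments of its two terms cannot cancel each other. -/
lemma planar_expansion {x y : ℂ} (hx : |x.im| ≤ x.re) (hy : |y.im| ≤ y.re) (hx0 : x ≠ 0)
    (hy0 : y ≠ 0) {b k : ℝ} (hb : 0 ≤ b) (hk : 0 ≤ k) :
    (1 / 3) * (b * ‖x ^ 2 - y ^ 2‖ + k * ‖1 / x - 1 / y‖) ≤
      ‖(b : ℂ) * (x ^ 2 - y ^ 2) - k * (1 / x - 1 / y)‖ := by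
  have e1 : (b : ℂ) * (x ^ 2 - y ^ 2) - k * (1 / x - 1 / y) =
      (x - y) * ((b : ℂ) * (x + y) + k * (x * y)⁻¹) := by
    field_simp
    ring
  have e2 : b * ‖x ^ 2 - y ^ 2‖ + k * ‖1 / x - 1 / y‖ =
      ‖x - y‖ * (‖(b : ℂ) * (x + y)‖ + ‖(k : ℂ) * (x * y)⁻¹‖) := by
    have h1 : x ^ 2 - y ^ 2 = (x - y) * (x + y) := by ring
    have h2 : 1 / x - 1 / y = -((x - y) * (x * y)⁻¹) := by field_simp; ring
    rw [h1, h2, norm_neg]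
    simp only [norm_mul, Complex.norm_real, Real.norm_eq_abs, abs_of_nonneg hb, abs_of_nonneg hk]
    ring
  rw [e1, e2, norm_mul (x - y), mul_left_comm]
  apply mul_le_mul_of_nonneg_left _ (norm_nonneg _)
  apply norm_add_ge_of_sector
  · rw [Complex.re_ofReal_mul, Complex.im_ofReal_mul, abs_mul, abs_of_nonneg hb]
    apply mul_le_mul_of_nonneg_left _ hb
    rw [Complex.add_im, Complex.add_re]
    exact (abs_add_le _ _).trans (add_le_add hx hy)
  · rw [Complex.re_ofReal_mul, Complex.inv_re]
    have := sector_mul_re hx hy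
    have := Complex.normSq_nonneg (x * y)
    positivity

/-- In the sector `|arg| ≤ π/4` the modulus of a sum dominates that of each term. -/
lemma sector_norm_add {x y : ℂ} (hx : |x.im| ≤ x.re) (hy : |y.im| ≤ y.re) : ‖x‖ ≤ ‖x + y‖ := by
  apply le_of_sq_le_sq _ (norm_nonneg _)
  simp only [← Complex.normSq_eq_norm_sq, Complex.normSq_apply, Complex.add_re, Complex.add_im]
  have h : |x.im * y.im| ≤ x.re * y.re := by
    rw [abs_mul]
    exact mul_le_mul hx hy (abs_nonneg _) ((abs_nonneg _).trans hx)
  have := (abs_le.mp h).1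
  nlinarith [sq_nonneg y.re, sq_nonneg y.im]

/-- With `x² = u`, this bounds the squared size of the bubble of scale `K = 1`
at a point whose transverse coordinate has squared length `t ≤ 2 (Re u - s²)`. -/
lemma bubble_size {x : ℂ} (hx0 : x ≠ 0) {s t : ℝ}
    (ht : t ≤ 2 * ((x ^ 2).re - s ^ 2)) :
    ‖(s : ℂ) / x‖ ^ 2 + s ^ 2 * t / ‖x ^ 2‖ ^ 2 ≤
      3 * ((s : ℂ) / x).re ^ 2 - 2 * ((s : ℂ) / x).re ^ 4 := by
  have hN : 0 < x.re ^ 2 + x.im ^ 2 := by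
    have := Complex.normSq_pos.mpr hx0
    rw [Complex.normSq_apply] at this; nlinarith
  have h1 : ‖x‖ ^ 2 = x.re ^ 2 + x.im ^ 2 := by
    rw [← Complex.normSq_eq_norm_sq, Complex.normSq_apply]; ring
  have h2 : ((s : ℂ) / x).re = s * x.re / (x.re ^ 2 + x.im ^ 2) := by
    rw [Complex.div_re, Complex.normSq_apply]; simp; ring_nf
  have h3 : (x ^ 2).re = x.re ^ 2 - x.im ^ 2 := by rw [pow_two, Complex.mul_re]; ring
  have h4 : ‖(s : ℂ) / x‖ ^ 2 = s ^ 2 / (x.re ^ 2 + x.im ^ 2) := by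
    rw [norm_div, div_pow, h1, Complex.norm_real, Real.norm_eq_abs, sq_abs]
  have h5 : ‖x ^ 2‖ ^ 2 = (x.re ^ 2 + x.im ^ 2) ^ 2 := by
    rw [norm_pow, h1]
  rw [h2, h4, h5]
  rw [h3] at ht
  set N := x.re ^ 2 + x.im ^ 2 with hNdef
  have h6 : s ^ 2 * t / N ^ 2 ≤ s ^ 2 * (2 * (x.re ^ 2 - x.im ^ 2 - s ^ 2)) / N ^ 2 := by gcongr
  have h7 : 3 * (s * x.re / N) ^ 2 - 2 * (s * x.re / N) ^ 4 - (s ^ 2 / N +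
      s ^ 2 * (2 * (x.re ^ 2 - x.im ^ 2 - s ^ 2)) / N ^ 2) =
      s ^ 2 / N ^ 4 * (3 * x.re ^ 2 * N ^ 2 - 2 * s ^ 2 * x.re ^ 4 - N ^ 3 -
        2 * (x.re ^ 2 - x.im ^ 2 - s ^ 2) * N ^ 2) := by
    field_simp; ring
  have h8 : 0 ≤ 3 * x.re ^ 2 * N ^ 2 - 2 * s ^ 2 * x.re ^ 4 - N ^ 3 -
        2 * (x.re ^ 2 - x.im ^ 2 - s ^ 2) * N ^ 2 := by
    have : 3 * x.re ^ 2 * N ^ 2 - 2 * s ^ 2 * x.re ^ 4 - N ^ 3 -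
        2 * (x.re ^ 2 - x.im ^ 2 - s ^ 2) * N ^ 2 =
        x.im ^ 2 * N ^ 2 + 2 * s ^ 2 * (N ^ 2 - x.re ^ 4) := by rw [hNdef]; ring
    rw [this]
    have : 0 ≤ N ^ 2 - x.re ^ 4 := by rw [hNdef]; ring_nf; positivity
    positivity
  have h9 := mul_nonneg (show 0 ≤ s ^ 2 / N ^ 4 by positivity) h8
  linarith

/-- On the boundary of the ball, where `t ≥ 2 (Re u - s²) - |u - s²|²`, a bubble point whose
longitudinal coordinate is near `3/4` has a large transverse coordinate. -/
lemma bubble_boundary {x : ℂ} (hx0 : x ≠ 0) {s t : ℝ} (hs2 : s ^ 2 ≤ 1 / 10)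
    (hre : s ^ 2 ≤ (x ^ 2).re)
    (ht : 2 * ((x ^ 2).re - s ^ 2) - ‖x ^ 2 - (s ^ 2 : ℝ)‖ ^ 2 ≤ t)
    (hX : ‖(s : ℂ) / x - 3 / 4‖ ≤ 3 / 32) :
    1 / 64 ≤ s ^ 2 * t / ‖x ^ 2‖ ^ 2 := by
  set X := (s : ℂ) / x with hXdef
  have hx2 : 0 < ‖x ^ 2‖ := norm_pos_iff.mpr (pow_ne_zero 2 hx0)
  have h1 : ‖x ^ 2 - (s ^ 2 : ℝ)‖ ^ 2 ≤ ‖x ^ 2‖ ^ 2 := by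
    simp only [← Complex.normSq_eq_norm_sq, Complex.normSq_apply, Complex.sub_re, Complex.sub_im,
      Complex.ofReal_re, Complex.ofReal_im]
    nlinarith [sq_nonneg s]
  have h2 : s ^ 2 * (2 * ((x ^ 2).re - s ^ 2)) / ‖x ^ 2‖ ^ 2 - s ^ 2 ≤ s ^ 2 * t / ‖x ^ 2‖ ^ 2 := by
    rw [div_sub' (by positivity)]
    gcongr
    nlinarith [sq_nonneg s, mul_le_mul_of_nonneg_left ht (sq_nonneg s),
      mul_le_mul_of_nonneg_left h1 (sq_nonneg s)]
  have h3 : s ^ 2 * (2 * ((x ^ 2).re - s ^ 2)) / ‖x ^ 2‖ ^ 2 = 2 * (X ^ 2).re - 2 * (‖X‖ ^ 2) ^ 2 := by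
    have e1 : X ^ 2 = (s ^ 2 : ℝ) / x ^ 2 := by rw [hXdef]; push_cast; rw [div_pow]
    have e2 : (‖X‖ ^ 2) ^ 2 = s ^ 4 / ‖x ^ 2‖ ^ 2 := by
      rw [hXdef, norm_div, Complex.norm_real, norm_pow, Real.norm_eq_abs, div_pow, sq_abs]; ring
    rw [e2, e1, Complex.div_re, Complex.ofReal_re, Complex.ofReal_im, Complex.normSq_eq_norm_sq]
    field_simp
    ring
  have h4 : (X.re - 3 / 4) ^ 2 + X.im ^ 2 ≤ (3 / 32) ^ 2 := by
    have := pow_le_pow_left₀ (norm_nonneg _) hX 2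
    rw [← Complex.normSq_eq_norm_sq, Complex.normSq_apply] at this
    have e3 : (3 / 4 : ℂ) = ((3 / 4 : ℝ) : ℂ) := by push_cast; rfl
    rw [e3] at this
    simp only [Complex.sub_re, Complex.sub_im, Complex.ofReal_re, Complex.ofReal_im] at this
    nlinarith
  have h5 : ‖X‖ ^ 2 = X.re ^ 2 + X.im ^ 2 := by
    rw [← Complex.normSq_eq_norm_sq, Complex.normSq_apply]; ring
  have h6 : (X ^ 2).re = X.re ^ 2 - X.im ^ 2 := by rw [pow_two, Complex.mul_re]; ring
  rw [h5, h6] at h3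
  have h7 : X.re ≤ 27 / 32 := by nlinarith [sq_nonneg X.im, sq_nonneg (X.re - 3/4 - 3/32)]
  have h8 : 21 / 32 ≤ X.re := by nlinarith [sq_nonneg X.im, sq_nonneg (X.re - 3/4 + 3/32)]
  have h9 : X.im ^ 2 ≤ (3 / 32) ^ 2 := by nlinarith [sq_nonneg (X.re - 3/4)]
  have h10 : (1:ℝ)/4 ≤ 2 * (X.re ^ 2 - X.im ^ 2) - 2 * (X.re ^ 2 + X.im ^ 2) ^ 2 := by
    have a1 : X.re ^ 2 ≤ (27 / 32) ^ 2 := by nlinarith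
    have a2 : (21 / 32) ^ 2 ≤ X.re ^ 2 := by nlinarith
    have a3 := sq_nonneg X.im
    generalize X.re ^ 2 = A at *
    generalize X.im ^ 2 = B at *
    nlinarith [mul_nonneg (sub_nonneg.mpr a1) (sub_nonneg.mpr a2),
      mul_nonneg a3 (sub_nonneg.mpr h9), mul_nonneg a3 (sub_nonneg.mpr a1)]
  linarith

end BallExhaustion

/-! ### The bubble and its shape -/

namespace BallExhaustion
open scoped InnerProductSpace

variable {E : Type*} [NormedAddCommGroup E] [InnerProductSpace ℂ E]

/-- The component of `z` orthogonal to the unit vector `e`. -/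
noncomputable def perp (e z : E) : E := z - ⟪e, z⟫_ℂ • e

/-- The shifted height `1 + s² - ⟪e, z⟫`; on the closed unit ball its real part is at least `s²`. -/
noncomputable def hgt (e : E) (s : ℝ) (z : E) : ℂ := 1 + (s : ℂ) ^ 2 - ⟪e, z⟫_ℂ

/-- The bubble `K s / √u • n + K s / u • W (z⊥)`, where `u = hgt e s z` and `z⊥ = perp e z`. It is
a holomorphic perturbation which, as `s → 0`, tends to `0` away from the pole `e` but near `e`
inflates to a blob of size comparable to `K` growing in the direction `n`; `W` is meant to be an
isometry carrying `e^⊥` to `n^⊥`. The square root is the principal one, holomorphic on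
`Re u > 0`. -/
noncomputable def bubble (e n : E) (W : E →L[ℂ] E) (K s : ℝ) (z : E) : E :=
  ((K : ℂ) * (s / (hgt e s z).sqrt)) • n + ((K : ℂ) * (s / hgt e s z)) • W (perp e z)

variable {e : E}

lemma inner_perp (he : ‖e‖ = 1) (z : E) : ⟪e, perp e z⟫_ℂ = 0 := by
  simp [perp, inner_self_eq_norm_sq_to_K, he]

lemma perp_sub (z y : E) : perp e (z - y) = perp e z - perp e y := by
  simp only [perp, inner_sub_right, sub_smul]; abel

lemma perp_add_smul (z : E) : ⟪e, z⟫_ℂ • e + perp e z = z := by simp [perp]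

lemma norm_perp_sq (he : ‖e‖ = 1) (z : E) : ‖perp e z‖ ^ 2 = ‖z‖ ^ 2 - ‖⟪e, z⟫_ℂ‖ ^ 2 := by
  have h : ‖⟪e, z⟫_ℂ • e + perp e z‖ ^ 2 = ‖⟪e, z⟫_ℂ • e‖ ^ 2 + ‖perp e z‖ ^ 2 := by
    have := norm_add_sq_eq_norm_sq_add_norm_sq_of_inner_eq_zero (𝕜 := ℂ) (⟪e, z⟫_ℂ • e) (perp e z)
      (by rw [inner_smul_left, inner_perp he, mul_zero])
    nlinarith
  rw [perp_add_smul, norm_smul, he, mul_one] at h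
  linarith

lemma norm_perp_le (he : ‖e‖ = 1) (z : E) : ‖perp e z‖ ≤ ‖z‖ := by
  apply le_of_sq_le_sq _ (norm_nonneg _)
  rw [norm_perp_sq he]
  nlinarith [sq_nonneg ‖⟪e, z⟫_ℂ‖]

lemma norm_inner_le' (he : ‖e‖ = 1) (z : E) : ‖⟪e, z⟫_ℂ‖ ≤ ‖z‖ := by
  have := norm_inner_le_norm (𝕜 := ℂ) e z
  rwa [he, one_mul] at this

lemma inner_re_le (he : ‖e‖ = 1) {z : E} (hz : ‖z‖ ≤ 1) : (⟪e, z⟫_ℂ).re ≤ 1 :=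
  (Complex.re_le_norm _).trans ((norm_inner_le' he z).trans hz)

lemma hgt_re (s : ℝ) (z : E) : (hgt e s z).re = s ^ 2 + (1 - (⟪e, z⟫_ℂ).re) := by
  have : ((s : ℂ) ^ 2).re = s ^ 2 := by rw [← Complex.ofReal_pow, Complex.ofReal_re]
  simp only [hgt, Complex.sub_re, Complex.add_re, Complex.one_re, this]; ring

lemma hgt_re_ge (he : ‖e‖ = 1) {z : E} (hz : ‖z‖ ≤ 1) (s : ℝ) : s ^ 2 ≤ (hgt e s z).re := by
  rw [hgt_re]; linarith [inner_re_le he hz]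

lemma hgt_re_pos (he : ‖e‖ = 1) {z : E} (hz : ‖z‖ ≤ 1) {s : ℝ} (hs : 0 < s) :
    0 < (hgt e s z).re := (by positivity : 0 < s ^ 2).trans_le (hgt_re_ge he hz s)

lemma norm_perp_sq_le (he : ‖e‖ = 1) {z : E} (hz : ‖z‖ ≤ 1) (s : ℝ) :
    ‖perp e z‖ ^ 2 ≤ 2 * ((hgt e s z).re - s ^ 2) := by
  rw [norm_perp_sq he, hgt_re]
  have h1 := inner_re_le he hz
  have h2 : ‖⟪e, z⟫_ℂ‖ ^ 2 = (⟪e, z⟫_ℂ).re ^ 2 + (⟪e, z⟫_ℂ).im ^ 2 := by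
    rw [← Complex.normSq_eq_norm_sq, Complex.normSq_apply]; ring
  have h3 : ‖z‖ ^ 2 ≤ 1 := pow_le_one₀ (norm_nonneg _) hz
  nlinarith [sq_nonneg (⟪e, z⟫_ℂ).im, sq_nonneg (1 - (⟪e, z⟫_ℂ).re)]

/-- Points of the ball of small height are close to the pole. -/
lemma norm_sub_pole_sq_le (he : ‖e‖ = 1) {z : E} (hz : ‖z‖ ≤ 1) :
    ‖z - e‖ ^ 2 ≤ 2 * (1 - (⟪e, z⟫_ℂ).re) := by
  rw [norm_sub_sq (𝕜 := ℂ), he, ← inner_conj_symm]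
  have h3 : ‖z‖ ^ 2 ≤ 1 := pow_le_one₀ (norm_nonneg _) hz
  simp only [RCLike.re_to_complex, Complex.conj_re]
  linarith

lemma hgt_eq_sub (s : ℝ) (z y : E) : hgt e s z - hgt e s y = -⟪e, z - y⟫_ℂ := by
  simp only [hgt, inner_sub_right]; ring

lemma norm_hgt_sub_le (he : ‖e‖ = 1) (s : ℝ) (z y : E) :
    ‖hgt e s z - hgt e s y‖ ≤ ‖z - y‖ := by
  rw [hgt_eq_sub, norm_neg]; exact norm_inner_le' he _

variable {n : E} {W : E →L[ℂ] E}

section Shape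

variable (he : ‖e‖ = 1) (hn : ‖n‖ = 1) (hW : ∀ v, ‖W v‖ = ‖v‖)
  (hWn : ∀ v, ⟪e, v⟫_ℂ = 0 → ⟪n, W v⟫_ℂ = 0)
include he hn hW hWn

lemma norm_split_sq (α β : ℂ) (z : E) :
    ‖α • n + β • W (perp e z)‖ ^ 2 = ‖α‖ ^ 2 + ‖β‖ ^ 2 * ‖perp e z‖ ^ 2 := by
  have := norm_add_sq_eq_norm_sq_add_norm_sq_of_inner_eq_zero (𝕜 := ℂ) (α • n) (β • W (perp e z))
      (by rw [inner_smul_left, inner_smul_right, hWn _ (inner_perp he z), mul_zero, mul_zero])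
  simp only [norm_smul, hn, hW] at this ⊢
  nlinarith

/-- The bubble stays in the closed ball of radius `r` about `r n`, which touches the origin.
The scale `K = 4 r / 3` is used throughout: it sends `s / √u = 3 / 4` to the centre. -/
lemma bubble_mem_ball {r s : ℝ} (hr : 0 < r) (hs : 0 < s) {z : E} (hz : ‖z‖ ≤ 1) :
    ‖bubble e n W (4 / 3 * r) s z - (r : ℂ) • n‖ ≤ r := by
  set u := hgt e s z with hu
  have hupos : 0 < u.re := hgt_re_pos he hz hs
  have hx0 := sqrt_ne_zero hupos
  set X := (s : ℂ) / u.sqrt with hX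
  have h1 : bubble e n W (4 / 3 * r) s z - (r : ℂ) • n =
      ((4 / 3 * r : ℝ) * X - r) • n + (((4 / 3 * r : ℝ) : ℂ) * (s / u)) • W (perp e z) := by
    rw [bubble, sub_smul]; abel
  have key := bubble_size hx0 (s := s) (t := ‖perp e z‖ ^ 2)
    (by rw [sqrt_sq]; exact norm_perp_sq_le he hz s)
  rw [sqrt_sq, ← hX] at key
  have h2 : ‖((4 / 3 * r : ℝ) : ℂ) * X - r‖ ^ 2 =
      (4 / 3 * r) ^ 2 * ‖X‖ ^ 2 - 2 * r * (4 / 3 * r) * X.re + r ^ 2 := by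
    simp only [← Complex.normSq_eq_norm_sq, Complex.normSq_apply, Complex.sub_re, Complex.sub_im,
      Complex.re_ofReal_mul, Complex.im_ofReal_mul, Complex.ofReal_re, Complex.ofReal_im]
    ring
  have h3 : ‖((4 / 3 * r : ℝ) : ℂ) * (s / u)‖ ^ 2 * ‖perp e z‖ ^ 2 =
      (4 / 3 * r) ^ 2 * (s ^ 2 * ‖perp e z‖ ^ 2 / ‖u‖ ^ 2) := by
    rw [norm_mul, norm_div, Complex.norm_real, Complex.norm_real, Real.norm_eq_abs,
      Real.norm_eq_abs, mul_pow, div_pow, sq_abs, sq_abs]; ring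
  apply le_of_sq_le_sq _ hr.le
  rw [h1, norm_split_sq he hn hW hWn, h2, h3]
  have ha : 0 ≤ X.re := by
    rw [hX, Complex.div_re, Complex.ofReal_re, Complex.ofReal_im]
    have := (sqrt_re_pos hupos).le
    have := Complex.normSq_nonneg u.sqrt
    simp only [zero_mul, zero_div, add_zero]; positivity
  have h4 : 3 * X.re - 2 * X.re ^ 3 ≤ 3 / 2 := by
    nlinarith [mul_nonneg ha (sq_nonneg (X.re - 7 / 10)), sq_nonneg (X.re - 7 / 10)]
  have h5 := mul_le_mul_of_nonneg_left key (sq_nonneg (4 / 3 * r))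
  have h6 := mul_le_mul_of_nonneg_left h4 (mul_nonneg ha (sq_nonneg (4 / 3 * r)))
  nlinarith

/-- The bubble sends the unit sphere away from the ball of radius `r / 8` about `r n`. -/
lemma bubble_sphere {r s : ℝ} (hr : 0 < r) (hs : 0 < s) (hs2 : s ^ 2 ≤ 1 / 10) {z : E}
    (hz : ‖z‖ = 1) : r / 8 ≤ ‖bubble e n W (4 / 3 * r) s z - (r : ℂ) • n‖ := by
  set u := hgt e s z with hu
  have hupos : 0 < u.re := hgt_re_pos he hz.le hs
  have hx0 := sqrt_ne_zero hupos
  set X := (s : ℂ) / u.sqrt with hX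
  have h1 : bubble e n W (4 / 3 * r) s z - (r : ℂ) • n =
      ((4 / 3 * r : ℝ) * X - r) • n + (((4 / 3 * r : ℝ) : ℂ) * (s / u)) • W (perp e z) := by
    rw [bubble, sub_smul]; abel
  have h3 : ‖((4 / 3 * r : ℝ) : ℂ) * (s / u)‖ ^ 2 * ‖perp e z‖ ^ 2 =
      (4 / 3 * r) ^ 2 * (s ^ 2 * ‖perp e z‖ ^ 2 / ‖u‖ ^ 2) := by
    rw [norm_mul, norm_div, Complex.norm_real, Complex.norm_real, Real.norm_eq_abs,
      Real.norm_eq_abs, mul_pow, div_pow, sq_abs, sq_abs]; ring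
  apply le_of_sq_le_sq _ (norm_nonneg _)
  rw [h1, norm_split_sq he hn hW hWn, h3]
  have h2 : ((4 / 3 * r : ℝ) : ℂ) * X - r = ((4 / 3 * r : ℝ) : ℂ) * (X - 3 / 4) := by
    push_cast; ring
  rw [h2, norm_mul, Complex.norm_real, Real.norm_eq_abs, mul_pow, sq_abs]
  rcases le_or_gt ‖X - 3 / 4‖ (3 / 32) with h | h
  · have key := bubble_boundary hx0 hs2 (t := ‖perp e z‖ ^ 2)
      (by rw [sqrt_sq]; exact hgt_re_ge he hz.le s)
      (by
        rw [sqrt_sq, norm_perp_sq he, hz]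
        have e1 : u - ((s ^ 2 : ℝ) : ℂ) = 1 - ⟪e, z⟫_ℂ := by rw [hu, hgt]; push_cast; ring
        rw [e1, hu, hgt_re]
        simp only [← Complex.normSq_eq_norm_sq, Complex.normSq_apply, Complex.sub_re,
          Complex.sub_im, Complex.one_re, Complex.one_im]
        nlinarith) h
    rw [sqrt_sq] at key
    nlinarith [mul_le_mul_of_nonneg_left key (sq_nonneg (4 / 3 * r)),
      mul_nonneg (sq_nonneg (4 / 3 * r)) (sq_nonneg ‖X - 3 / 4‖)]
  · have h6 : (3 / 32 : ℝ) ^ 2 ≤ ‖X - 3 / 4‖ ^ 2 := pow_le_pow_left₀ (by norm_num) h.le 2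
    have h7 : 0 ≤ (4 / 3 * r) ^ 2 * (s ^ 2 * ‖perp e z‖ ^ 2 / ‖u‖ ^ 2) := by positivity
    nlinarith [mul_le_mul_of_nonneg_left h6 (sq_nonneg (4 / 3 * r))]

omit hn hW hWn in
/-- The point `(1 - 7 s²/9) e` of the ball is sent exactly to the centre `r n`. -/
lemma bubble_center {r s : ℝ} (hs : 0 < s) :
    bubble e n W (4 / 3 * r) s ((1 - 7 / 9 * (s : ℂ) ^ 2) • e) = (r : ℂ) • n := by
  have hin : ⟪e, (1 - 7 / 9 * (s : ℂ) ^ 2) • e⟫_ℂ = 1 - 7 / 9 * (s : ℂ) ^ 2 := by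
    rw [inner_smul_right, inner_self_eq_norm_sq_to_K, he]; simp
  have hp : perp e ((1 - 7 / 9 * (s : ℂ) ^ 2) • e) = 0 := by rw [perp, hin, sub_self]
  have hh : hgt e s ((1 - 7 / 9 * (s : ℂ) ^ 2) • e) = (((4 / 3 * s) ^ 2 : ℝ) : ℂ) := by
    rw [hgt, hin]; push_cast; ring
  have hq : (((4 / 3 * s) ^ 2 : ℝ) : ℂ).sqrt = ((4 / 3 * s : ℝ) : ℂ) := by
    rw [Complex.sqrt, Complex.ofReal_pow]
    exact Complex.sq_cpow_two_inv (by rw [Complex.ofReal_re]; positivity)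
  rw [bubble, hp, map_zero, smul_zero, add_zero, hh, hq]
  congr 1
  have : (s : ℂ) ≠ 0 := by exact_mod_cast hs.ne'
  push_cast; field_simp; try norm_num

end Shape

lemma contDiffOn_bubble (he : ‖e‖ = 1) {K s : ℝ} (hs : 0 < s) :
    ContDiffOn ℂ 1 (bubble e n W K s) (closedBall 0 1) := by
  intro z hz
  have hz : ‖z‖ ≤ 1 := by simpa using hz
  have hpos := hgt_re_pos he hz hs
  have h1 : ContDiff ℂ 1 (hgt e s) := by
    have : hgt e s = fun z => 1 + (s : ℂ) ^ 2 - innerSL ℂ e z := by ext; simp [hgt]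
    rw [this]
    exact contDiff_const.sub (innerSL ℂ e).contDiff
  have h2 : ContDiff ℂ 1 (fun z => W (perp e z)) := by
    have : (fun z => W (perp e z)) = fun z => W (z - innerSL ℂ e z • e) := by ext; simp [perp]
    rw [this]
    exact W.contDiff.comp (contDiff_id.sub ((innerSL ℂ e).contDiff.smul contDiff_const))
  have h3 : ContDiffAt ℂ 1 (fun z => (hgt e s z).sqrt) z := by
    simp only [Complex.sqrt]
    have h3' : ContDiffAt ℂ 1 (fun u : ℂ => u ^ (2⁻¹ : ℂ)) (hgt e s z) := by
      apply AnalyticAt.contDiffAt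
      exact analyticAt_id.cpow analyticAt_const (Or.inl hpos)
    exact h3'.comp z h1.contDiffAt
  apply ContDiffAt.contDiffWithinAt
  have hne : hgt e s z ≠ 0 := by intro h; rw [h] at hpos; simp at hpos
  refine ContDiffAt.add (ContDiffAt.smul (contDiffAt_const.mul
    (contDiffAt_const.div h3 (sqrt_ne_zero hpos))) contDiffAt_const)
    (ContDiffAt.smul (contDiffAt_const.mul (contDiffAt_const.div h1.contDiffAt hne))
    h2.contDiffAt)

end BallExhaustion

/-! ### Expansion and decay of the bubble -/

namespace BallExhaustion
open scoped InnerProductSpace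

variable {E : Type*} [NormedAddCommGroup E] [InnerProductSpace ℂ E]
variable {e n : E} {W : E →L[ℂ] E}

lemma bubble_sub (K s : ℝ) (z y : E) :
    bubble e n W K s z - bubble e n W K s y =
      ((K : ℂ) * (s / (hgt e s z).sqrt - s / (hgt e s y).sqrt)) • n +
      ((K : ℂ) * (s / hgt e s y)) • W (perp e (z - y)) +
      ((K : ℂ) * (s / hgt e s z - s / hgt e s y)) • W (perp e z) := by
  simp only [bubble, perp_sub, map_sub]
  module

/-- Differences of `s / u` in terms of differences of `s / √u`. -/
lemma div_sub_div_eq {u v : ℂ} (hu : 0 < u.re) (hv : 0 < v.re) (s : ℂ) :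
    s / u - s / v = (s / u.sqrt - s / v.sqrt) * (1 / u.sqrt + 1 / v.sqrt) := by
  conv_lhs => rw [← sqrt_sq u, ← sqrt_sq v]
  have h1 := sqrt_ne_zero hu
  have h2 := sqrt_ne_zero hv
  field_simp
  ring

lemma norm_perp_le_sqrt (he : ‖e‖ = 1) {z : E} (hz : ‖z‖ ≤ 1) (s : ℝ) :
    ‖perp e z‖ ≤ 3 / 2 * ‖(hgt e s z).sqrt‖ := by
  apply le_of_sq_le_sq _ (by positivity)
  have h1 := norm_perp_sq_le he hz s
  have h2 := Complex.re_le_norm (hgt e s z)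
  rw [mul_pow, sqrt_norm_sq]
  nlinarith [norm_nonneg (hgt e s z), sq_nonneg s]

/-- A linear map plus the bubble expands distances at a rate independent of the parameter `s`,
provided the linear map matches the frame `(e, n, W)`: both summands push in compatible
directions. -/
lemma bubble_antilip (he : ‖e‖ = 1) (hn : ‖n‖ = 1) (hW : ∀ v, ‖W v‖ = ‖v‖)
    (hWn : ∀ v, ⟪e, v⟫_ℂ = 0 → ⟪n, W v⟫_ℂ = 0) {M : E →L[ℂ] E} {b l K : ℝ} (hb : 0 < b)
    (hl : 0 < l) (hK : 0 ≤ K) (hM : ∀ v, ⟪n, M v⟫_ℂ = b * ⟪e, v⟫_ℂ)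
    (hpos : ∀ v, ⟪e, v⟫_ℂ = 0 → l * ‖v‖ ^ 2 ≤ (⟪W v, M v⟫_ℂ).re) :
    ∃ C > 0, ∀ s > 0, ∀ z y : E, ‖z‖ ≤ 1 → ‖y‖ ≤ 1 →
      ‖z - y‖ ≤ C * ‖M (z - y) + (bubble e n W K s z - bubble e n W K s y)‖ := by
  refine ⟨3 / b + (13 + 3 * ‖M e‖ / b) / l, by positivity, ?_⟩
  intro s hs
  have main : ∀ z y : E, ‖z‖ ≤ 1 → ‖y‖ ≤ 1 → ‖hgt e s z‖ ≤ ‖hgt e s y‖ →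
      ‖z - y‖ ≤ (3 / b + (13 + 3 * ‖M e‖ / b) / l) *
        ‖M (z - y) + (bubble e n W K s z - bubble e n W K s y)‖ := by
    intro z y hz hy huv
    have hu := hgt_re_pos he hz hs
    have hv := hgt_re_pos he hy hs
    have hd1 := hgt_eq_sub (e := e) s z y
    have hzp := norm_perp_le_sqrt he hz s
    rw [bubble_sub]
    have hxy : ‖(hgt e s z).sqrt‖ ≤ ‖(hgt e s y).sqrt‖ := by
      apply le_of_sq_le_sq _ (norm_nonneg _); rwa [sqrt_norm_sq, sqrt_norm_sq]
    have hk := div_sub_div_eq hu hv (s : ℂ)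
    generalize hgt e s z = u at *
    generalize hgt e s y = v at *
    set d := z - y with hd
    set D := M d + (((K : ℂ) * (s / u.sqrt - s / v.sqrt)) • n +
      ((K : ℂ) * (s / v)) • W (perp e d) + ((K : ℂ) * (s / u - s / v)) • W (perp e z)) with hD
    have hx0 := sqrt_ne_zero hu
    have hy0 := sqrt_ne_zero hv
    set Q := ‖(s : ℂ) / u.sqrt - s / v.sqrt‖ with hQ
    -- the component of `D` along `n`: the planar estimate, as `W (perp _)` is orthogonal to `n`
    have h1 : b * ‖⟪e, d⟫_ℂ‖ + K * Q ≤ 3 * ‖D‖ := by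
      have p := planar_expansion (sqrt_sector hu) (sqrt_sector hv) hx0 hy0 hb.le
        (k := K * s) (by positivity)
      have e1 : ⟪n, D⟫_ℂ = -((b : ℂ) * (u.sqrt ^ 2 - v.sqrt ^ 2) -
          ((K * s : ℝ) : ℂ) * (1 / u.sqrt - 1 / v.sqrt)) := by
        rw [hD]
        simp only [inner_add_right, inner_smul_right, hM, hWn _ (inner_perp he _),
          inner_self_eq_norm_sq_to_K, hn, sqrt_sq, hd1]
        push_cast; ring
      have e2 : ‖⟪n, D⟫_ℂ‖ ≤ ‖D‖ := norm_inner_le' hn D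
      rw [e1, norm_neg] at e2
      have e3 : ‖u.sqrt ^ 2 - v.sqrt ^ 2‖ = ‖⟪e, d⟫_ℂ‖ := by
        rw [sqrt_sq, sqrt_sq, hd1, norm_neg]
      have e4 : Q = s * ‖1 / u.sqrt - 1 / v.sqrt‖ := by
        rw [hQ, ← abs_of_pos hs, ← Real.norm_eq_abs, ← Complex.norm_real, ← norm_mul,
          Complex.norm_real, Real.norm_eq_abs, abs_of_pos hs]
        congr 1; ring
      rw [e3] at p
      rw [e4]
      linarith
    -- the cross term, controlled by the increment along `n`; this is where `|u| ≤ |v|` is used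
    have h2 : K * ‖(s : ℂ) / u - s / v‖ * ‖perp e z‖ ≤ 3 * (K * Q) := by
      rw [hk, norm_mul]
      have hxp : 0 < ‖u.sqrt‖ := norm_pos_iff.mpr hx0
      have e1 : ‖1 / u.sqrt + 1 / v.sqrt‖ ≤ 2 / ‖u.sqrt‖ := by
        refine (norm_add_le _ _).trans ?_
        rw [norm_div, norm_div, norm_one]
        have := one_div_le_one_div_of_le hxp hxy
        calc _ ≤ 1 / ‖u.sqrt‖ + 1 / ‖u.sqrt‖ := by linarith
          _ = _ := by ring
      have e2 : ‖1 / u.sqrt + 1 / v.sqrt‖ * ‖perp e z‖ ≤ 3 := by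
        calc _ ≤ 2 / ‖u.sqrt‖ * (3 / 2 * ‖u.sqrt‖) := by gcongr
          _ = 3 := by field_simp
      calc _ = K * Q * (‖1 / u.sqrt + 1 / v.sqrt‖ * ‖perp e z‖) := by ring
        _ ≤ K * Q * 3 := by gcongr
        _ = _ := by ring
    -- the tangential part: `M` and `(K s / v) W` both have nonnegative real part against `W`
    have h3 : l * ‖perp e d‖ ≤ ‖M (perp e d) + ((K : ℂ) * (s / v)) • W (perp e d)‖ := by
      rcases eq_or_ne (perp e d) 0 with h0 | h0
      · simp [h0]
      have hp : 0 < ‖perp e d‖ := norm_pos_iff.mpr h0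
      have e1 := hpos _ (inner_perp he d)
      have e2 := re_inner_le_norm (𝕜 := ℂ) (W (perp e d))
        (M (perp e d) + ((K : ℂ) * (s / v)) • W (perp e d))
      rw [inner_add_right, inner_smul_right, inner_self_eq_norm_sq_to_K, hW, map_add] at e2
      have e3 : 0 ≤ (((K : ℂ) * (s / v)) * ((‖perp e d‖ : ℂ)) ^ 2).re := by
        rw [← Complex.ofReal_pow, Complex.re_mul_ofReal, Complex.re_ofReal_mul, Complex.div_re,
          Complex.ofReal_re, Complex.ofReal_im]
        have := Complex.normSq_nonneg v
        simp only [zero_mul, zero_div, add_zero]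
        positivity
      simp only [RCLike.re_to_complex, Complex.coe_algebraMap] at e2 e3
      have e4 : l * ‖perp e d‖ * ‖perp e d‖ ≤
          ‖M (perp e d) + ((K : ℂ) * (s / v)) • W (perp e d)‖ * ‖perp e d‖ := by
        have e5 : l * ‖perp e d‖ * ‖perp e d‖ = l * ‖perp e d‖ ^ 2 := by ring
        rw [e5, mul_comm (‖_ + _‖)]
        refine le_trans ?_ e2
        refine e1.trans ?_
        exact le_add_of_nonneg_right e3
      exact le_of_mul_le_mul_right e4 hp
    have h4 : M (perp e d) + ((K : ℂ) * (s / v)) • W (perp e d) =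
        D - ⟪e, d⟫_ℂ • M e - ((K : ℂ) * (s / u.sqrt - s / v.sqrt)) • n -
          ((K : ℂ) * (s / u - s / v)) • W (perp e z) := by
      have : M d = ⟪e, d⟫_ℂ • M e + M (perp e d) := by
        conv_lhs => rw [← perp_add_smul (e := e) d, map_add, map_smul]
      rw [hD, this]; abel
    have hKn : ‖(K : ℂ)‖ = K := by rw [Complex.norm_real, Real.norm_eq_abs, abs_of_nonneg hK]
    have h5 : l * ‖perp e d‖ ≤ ‖D‖ + ‖⟪e, d⟫_ℂ‖ * ‖M e‖ + K * Q + 3 * (K * Q) := by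
      refine h3.trans ?_
      rw [h4]
      refine (norm_sub_le _ _).trans (add_le_add ((norm_sub_le _ _).trans
        (add_le_add ((norm_sub_le _ _).trans (add_le_add le_rfl ?_)) ?_)) ?_)
      · rw [norm_smul]
      · rw [norm_smul, norm_mul, hn, hKn, mul_one]
      · rw [norm_smul, norm_mul, hKn, hW]; exact h2
    have hKQ : 0 ≤ K * Q := by positivity
    have h6 : ‖⟪e, d⟫_ℂ‖ ≤ 3 / b * ‖D‖ := by
      rw [div_mul_eq_mul_div, le_div_iff₀ hb]; nlinarith
    have h7 : ‖perp e d‖ ≤ (13 + 3 * ‖M e‖ / b) / l * ‖D‖ := by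
      rw [div_mul_eq_mul_div, le_div_iff₀ hl]
      have : ‖⟪e, d⟫_ℂ‖ * ‖M e‖ ≤ 3 / b * ‖D‖ * ‖M e‖ := by gcongr
      have e1 : (13 + 3 * ‖M e‖ / b) * ‖D‖ = 13 * ‖D‖ + 3 / b * ‖D‖ * ‖M e‖ := by ring
      rw [e1]
      have : 0 ≤ b * ‖⟪e, d⟫_ℂ‖ := by positivity
      nlinarith
    calc ‖d‖ = ‖⟪e, d⟫_ℂ • e + perp e d‖ := by rw [perp_add_smul]
      _ ≤ ‖⟪e, d⟫_ℂ‖ + ‖perp e d‖ := by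
          refine (norm_add_le _ _).trans ?_
          rw [norm_smul, he, mul_one]
      _ ≤ _ := by rw [add_mul]; linarith
  intro z y hz hy
  rcases le_total ‖hgt e s z‖ ‖hgt e s y‖ with h | h
  · exact main z y hz hy h
  · have := main y z hy hz h
    have e1 : M (z - y) + (bubble e n W K s z - bubble e n W K s y) =
      -(M (y - z) + (bubble e n W K s y - bubble e n W K s z)) := by
      rw [← neg_sub y z, map_neg]; abel
    rwa [e1, norm_neg, norm_sub_rev]

/-- Away from the pole the bubble is small, together with its Lipschitz constant. -/
lemma bubble_far (he : ‖e‖ = 1) (hn : ‖n‖ = 1) (hW : ∀ v, ‖W v‖ = ‖v‖) {K σ : ℝ}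
    (hK : 0 ≤ K) (hσ : 0 < σ) :
    ∃ C > 0, ∀ s > 0, (∀ z : E, ‖z‖ ≤ 1 → σ ≤ 1 - (⟪e, z⟫_ℂ).re →
        ‖bubble e n W K s z‖ ≤ C * s) ∧
      ∀ z y : E, ‖z‖ ≤ 1 → ‖y‖ ≤ 1 → σ ≤ 1 - (⟪e, z⟫_ℂ).re → σ ≤ 1 - (⟪e, y⟫_ℂ).re →
        ‖bubble e n W K s z - bubble e n W K s y‖ ≤ C * s * ‖z - y‖ := by
  have hτ : 0 < √σ := Real.sqrt_pos.mpr hσ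
  set τ := √σ with hτ'
  have hτ2 : τ ^ 2 = σ := Real.sq_sqrt hσ.le
  refine ⟨(K + 1) * (1 / τ + 1 / σ + 1 / τ ^ 3 + 2 / τ ^ 4), by positivity, fun s hs => ?_⟩
  have hKn : ‖(K : ℂ)‖ = K := by rw [Complex.norm_real, Real.norm_eq_abs, abs_of_nonneg hK]
  have hsn : ‖(s : ℂ)‖ = s := by rw [Complex.norm_real, Real.norm_eq_abs, abs_of_pos hs]
  have far : ∀ z : E, σ ≤ 1 - (⟪e, z⟫_ℂ).re → 0 < (hgt e s z).re ∧ σ ≤ ‖hgt e s z‖ ∧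
      τ ≤ ‖(hgt e s z).sqrt‖ := by
    intro z hz
    have h1 : σ ≤ (hgt e s z).re := by rw [hgt_re]; nlinarith [sq_nonneg s]
    have h2 := h1.trans (Complex.re_le_norm _)
    refine ⟨hσ.trans_le h1, h2, ?_⟩
    apply le_of_sq_le_sq _ (norm_nonneg _)
    rwa [sqrt_norm_sq, hτ2]
  constructor
  · intro z hz hz'
    obtain ⟨hu, h1, h2⟩ := far z hz'
    have hp := (norm_perp_le he z).trans hz
    rw [bubble]
    refine (norm_add_le _ _).trans ?_
    rw [norm_smul, norm_smul, norm_mul, norm_mul, norm_div, norm_div, hn, hKn, hsn, hW]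
    calc K * (s / ‖(hgt e s z).sqrt‖) * 1 + K * (s / ‖hgt e s z‖) * ‖perp e z‖ 
        ≤ (K + 1) * (s / τ) * 1 + (K + 1) * (s / σ) * 1 := by gcongr <;> linarith
      _ = (K + 1) * (1 / τ + 1 / σ) * s := by ring
      _ ≤ _ := by
        gcongr ?_ * _
        refine mul_le_mul_of_nonneg_left ?_ (by linarith)
        have : 0 ≤ 1 / τ ^ 3 + 2 / τ ^ 4 := by positivity
        linarith
  · intro z y hz hy hz' hy'
    obtain ⟨hu, h1, h2⟩ := far z hz'
    obtain ⟨hv, h3, h4⟩ := far y hy'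
    have hp := (norm_perp_le he z).trans hz
    have hpd := norm_perp_le he (z - y)
    rw [bubble_sub]
    have hd := norm_hgt_sub_le he s z y
    generalize hgt e s z = u at *
    generalize hgt e s y = v at *
    have hx0 := sqrt_ne_zero hu
    have hy0 := sqrt_ne_zero hv
    set d := ‖z - y‖
    have hd0 : 0 ≤ d := norm_nonneg _
    have hxy : ‖u.sqrt - v.sqrt‖ * τ ≤ d := by
      calc _ ≤ ‖u.sqrt - v.sqrt‖ * ‖u.sqrt + v.sqrt‖ := by
            gcongr; exact h2.trans (sector_norm_add (sqrt_sector hu) (sqrt_sector hv))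
        _ = ‖u - v‖ := by
            rw [← norm_mul]; congr 1; conv_rhs => rw [← sqrt_sq u, ← sqrt_sq v]
            ring
        _ ≤ d := hd
    have q1 : ‖(s : ℂ) / u.sqrt - s / v.sqrt‖ ≤ s * d / τ ^ 3 := by
      have : (s : ℂ) / u.sqrt - s / v.sqrt = s * (v.sqrt - u.sqrt) / (u.sqrt * v.sqrt) := by
        field_simp
      rw [this, norm_div, norm_mul, norm_mul, hsn, norm_sub_rev]
      calc _ ≤ s * (d / τ) / (τ * τ) := by
            gcongr
            rwa [le_div_iff₀ hτ]
        _ = _ := by field_simp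
    have q2 : ‖(s : ℂ) / u - s / v‖ ≤ 2 * (s * d / τ ^ 4) := by
      rw [div_sub_div_eq hu hv, norm_mul]
      have : ‖1 / u.sqrt + 1 / v.sqrt‖ ≤ 2 / τ := by
        refine (norm_add_le _ _).trans ?_
        rw [norm_div, norm_div, norm_one]
        calc _ ≤ 1 / τ + 1 / τ := by gcongr
          _ = _ := by ring
      calc _ ≤ s * d / τ ^ 3 * (2 / τ) := by gcongr
        _ = _ := by field_simp
    refine (norm_add_le _ _).trans ((add_le_add (norm_add_le _ _) le_rfl).trans ?_)
    simp only [norm_smul, norm_mul, hn, hKn, hW]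
    have q3 : ‖(s : ℂ) / v‖ ≤ s / σ := by rw [norm_div, hsn]; gcongr
    calc _ ≤ (K + 1) * (s * d / τ ^ 3) * 1 + (K + 1) * (s / σ) * d +
          (K + 1) * (2 * (s * d / τ ^ 4)) * 1 := by gcongr <;> linarith
      _ = (K + 1) * (1 / σ + 1 / τ ^ 3 + 2 / τ ^ 4) * s * d := by ring
      _ ≤ _ := by
        gcongr ?_ * _ * _
        refine mul_le_mul_of_nonneg_left ?_ (by linarith)
        have : 0 ≤ 1 / τ := by positivity
        linarith

end BallExhaustion

/-! ### The frame from the polar decomposition -/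

namespace BallExhaustion
open scoped InnerProductSpace

variable {E : Type*} [NormedAddCommGroup E] [InnerProductSpace ℂ E]
variable {e n : E}

lemma exists_norm_ge [FiniteDimensional ℂ E] {T : E →L[ℂ] E} (hT : Function.Injective T) :
    ∃ c > 0, ∀ v, c * ‖v‖ ≤ ‖T v‖ := by
  obtain ⟨K, hK, h⟩ := (T : E →ₗ[ℂ] E).exists_antilipschitzWith (LinearMap.ker_eq_bot.mpr hT)
  have hK' : (0 : ℝ) < K := hK
  refine ⟨(K : ℝ)⁻¹, by positivity, fun v => ?_⟩
  have := h.le_mul_dist v 0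
  simp only [map_zero, dist_zero_right] at this
  rw [inv_mul_le_iff₀ hK']
  exact this

/-- Polar decomposition adapted to the frames `e ⟂ e^⊥` and `n ⟂ n^⊥`: on the complex tangent space
`e^⊥` the map `M` has positive real part relative to a suitable linear isometry `W`. -/
lemma exists_frame [FiniteDimensional ℂ E] (he : ‖e‖ = 1) (hn : ‖n‖ = 1) {M : E →L[ℂ] E}
    (hinj : Function.Injective M) {b : ℝ}
    (hM : ∀ v, ⟪n, M v⟫_ℂ = b * ⟪e, v⟫_ℂ) :
    ∃ W : E →L[ℂ] E, (∀ v, ‖W v‖ = ‖v‖) ∧ (∀ v, ⟪e, v⟫_ℂ = 0 → ⟪n, W v⟫_ℂ = 0) ∧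
      ∃ l > 0, ∀ v, ⟪e, v⟫_ℂ = 0 → l * ‖v‖ ^ 2 ≤ (⟪W v, M v⟫_ℂ).re := by
  have := FiniteDimensional.complete ℂ E
  -- `T` agrees with `M` on `e^⊥` and sends `e` to `n`
  let T : E →L[ℂ] E := M ∘L (ContinuousLinearMap.id ℂ E - (innerSL ℂ e).smulRight e) +
    (innerSL ℂ e).smulRight n
  have hT : ∀ v, T v = M (perp e v) + ⟪e, v⟫_ℂ • n := fun v => by simp [T, perp]
  have hee : ⟪e, e⟫_ℂ = 1 := by simp [inner_self_eq_norm_sq_to_K, he]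
  have hnn : ⟪n, n⟫_ℂ = 1 := by simp [inner_self_eq_norm_sq_to_K, hn]
  have hTe : T e = n := by rw [hT, perp, hee]; simp
  have hTn : ∀ v, ⟪n, T v⟫_ℂ = ⟪e, v⟫_ℂ := fun v => by
    rw [hT, inner_add_right, hM, inner_perp he, inner_smul_right, hnn]; simp
  have hTinj : Function.Injective T := by
    rw [injective_iff_map_eq_zero]
    intro v hv
    have h1 : ⟪e, v⟫_ℂ = 0 := by rw [← hTn, hv, inner_zero_right]
    have h2 : M (perp e v) = 0 := by rw [hT, h1, zero_smul, add_zero] at hv; exact hv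
    have h3 : perp e v = 0 := hinj (by rw [h2, map_zero])
    simpa [perp, h1] using h3
  have hTadj : (star T) n = e := by
    rw [ContinuousLinearMap.star_eq_adjoint]
    apply ext_inner_right ℂ
    intro v
    rw [ContinuousLinearMap.adjoint_inner_left, hTn]
  -- `T = W P` with `P = |T|`; since `T* n = e`, the modulus fixes `e`, hence preserves `e^⊥`
  let P : E →L[ℂ] E := CFC.abs T
  have hPP : P * P = star T * T := CFC.abs_mul_abs T
  have hP0 : 0 ≤ P := CFC.abs_nonneg T
  have hPpos : P.IsPositive := (ContinuousLinearMap.nonneg_iff_isPositive P).mp hP0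
  have hPsym : ∀ v w, ⟪P v, w⟫_ℂ = ⟪v, P w⟫_ℂ := hPpos.isSymmetric
  have hPT : ∀ v w, ⟪P v, P w⟫_ℂ = ⟪T v, T w⟫_ℂ := fun v w => by
    have h : P (P w) = (star T) (T w) := congrArg (fun A : E →L[ℂ] E => A w) hPP
    rw [hPsym, h, ContinuousLinearMap.star_eq_adjoint, ContinuousLinearMap.adjoint_inner_right]
  have hPe : P e = e := by
    have h1 : P (P e) = e := by
      have : P (P e) = (star T) (T e) := congrArg (fun A : E →L[ℂ] E => A e) hPP
      rw [this, hTe, hTadj]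
    have h2 : P (P e - e) = -(P e - e) := by rw [map_sub, h1]; abel
    have h3 := hPpos.re_inner_nonneg_left (P e - e)
    rw [h2, inner_neg_left, inner_self_eq_norm_sq_to_K] at h3
    have h4 : ‖P e - e‖ ^ 2 ≤ 0 := by
      have : RCLike.re (-((‖P e - e‖ : ℂ)) ^ 2) = -‖P e - e‖ ^ 2 := by
        rw [← Complex.ofReal_pow, ← Complex.ofReal_neg]; exact Complex.ofReal_re _
      simp only [Complex.coe_algebraMap] at h3
      rw [this] at h3; linarith
    have h5 : ‖P e - e‖ = 0 := by nlinarith [norm_nonneg (P e - e)]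
    exact sub_eq_zero.mp (norm_eq_zero.mp h5)
  have hPn : ∀ v, ‖P v‖ = ‖T v‖ := fun v => by
    have := hPT v v
    simp only [inner_self_eq_norm_sq_to_K] at this
    have : ‖P v‖ ^ 2 = ‖T v‖ ^ 2 := by exact_mod_cast this
    exact (pow_left_inj₀ (norm_nonneg _) (norm_nonneg _) two_ne_zero).mp this
  have hPinj : Function.Injective P := by
    rw [injective_iff_map_eq_zero]
    intro v hv
    have := hPn v
    rw [hv, norm_zero] at this
    exact hTinj (by rw [map_zero]; exact norm_eq_zero.mp this.symm)
  let Pe := LinearEquiv.ofInjectiveEndo (P : E →ₗ[ℂ] E) hPinj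
  have hPe' : ∀ v, Pe v = P v := fun v => rfl
  let W : E →L[ℂ] E := LinearMap.toContinuousLinearMap ((T : E →ₗ[ℂ] E) ∘ₗ (Pe.symm : E →ₗ[ℂ] E))
  have hWP : ∀ v, W (P v) = T v := fun v => by
    change T (Pe.symm (Pe v)) = T v
    rw [Pe.symm_apply_apply]
  have hsurj : ∀ v, ∃ w, P w = v := fun v => ⟨Pe.symm v, Pe.apply_symm_apply v⟩
  have hWin : ∀ v w, ⟪W v, W w⟫_ℂ = ⟪v, w⟫_ℂ := by
    intro v w
    obtain ⟨v, rfl⟩ := hsurj v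
    obtain ⟨w, rfl⟩ := hsurj w
    rw [hWP, hWP, hPT]
  have hWe : W e = n := by conv_lhs => rw [← hPe, hWP, hTe]
  refine ⟨W, ?_, ?_, ?_⟩
  · intro v
    obtain ⟨v, rfl⟩ := hsurj v
    rw [hWP, hPn]
  · intro v hv
    rw [← hWe, hWin, hv]
  · let R : E →L[ℂ] E := CFC.sqrt P
    have hRR : R * R = P := CFC.sqrt_mul_sqrt_self P hP0
    have hR0 : 0 ≤ R := CFC.sqrt_nonneg P
    have hRsym : ∀ v w, ⟪R v, w⟫_ℂ = ⟪v, R w⟫_ℂ :=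
      ((ContinuousLinearMap.nonneg_iff_isPositive R).mp hR0).isSymmetric
    have hRR' : ∀ v, R (R v) = P v := fun v => congrArg (fun A : E →L[ℂ] E => A v) hRR
    have hRinj : Function.Injective R := fun v w h => hPinj (by rw [← hRR', ← hRR', h])
    obtain ⟨c, hc, h⟩ := exists_norm_ge hRinj
    refine ⟨c ^ 2, by positivity, fun v hv => ?_⟩
    have h1 : M v = W (P v) := by
      rw [hWP, hT, hv, zero_smul, add_zero, perp, hv, zero_smul, sub_zero]
    rw [h1, hWin, ← hRR', ← hRsym, inner_self_eq_norm_sq_to_K]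
    have h2 := pow_le_pow_left₀ (by positivity) (h v) 2
    rw [mul_pow] at h2
    simp only [Complex.coe_algebraMap, ← Complex.ofReal_pow, Complex.ofReal_re]
    exact h2

end BallExhaustion

/-! ### Expanding maps and nearest points -/

namespace BallExhaustion
open scoped InnerProductSpace
open Filter Topology

variable {E : Type*} [NormedAddCommGroup E] [InnerProductSpace ℂ E]

/-- `F` expands distances on `A` by at least the factor `c`. -/
def Expands (c : ℝ) (F : E → E) (A : Set E) : Prop :=
  ∀ x ∈ A, ∀ y ∈ A, c * ‖x - y‖ ≤ ‖F x - F y‖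

omit [InnerProductSpace ℂ E] in
lemma Expands.mono {c : ℝ} {F : E → E} {A B : Set E} (h : Expands c F A) (hBA : B ⊆ A) :
    Expands c F B := fun x hx y hy => h x (hBA hx) y (hBA hy)

omit [InnerProductSpace ℂ E] in
lemma Expands.injOn {c : ℝ} {F : E → E} {A : Set E} (h : Expands c F A) (hc : 0 < c) :
    Set.InjOn F A := by
  intro x hx y hy hxy
  have := h x hx y hy
  rw [hxy, sub_self, norm_zero] at this
  have h0 : ‖x - y‖ ≤ 0 := by
    by_contra! h
    nlinarith
  exact sub_eq_zero.mp (norm_le_zero_iff.mp h0)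

lemma tendsto_norm_natCast : Tendsto (fun k : ℕ => ‖(k : ℂ)‖) atTop atTop := by
  simp only [Complex.norm_natCast]
  exact tendsto_natCast_atTop_atTop

lemma tendsto_add_inv_smul (x v : E) :
    Tendsto (fun k : ℕ => x + ((k : ℂ))⁻¹ • v) atTop (𝓝 x) := by
  have h1 : Tendsto (fun k : ℕ => ((k : ℂ))⁻¹) atTop (𝓝 0) :=
    tendsto_inv₀_cobounded.comp (tendsto_norm_atTop_iff_cobounded.mp tendsto_norm_natCast)
  have h2 := (h1.smul_const v).const_add x
  rwa [zero_smul, add_zero] at h2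

lemma Expands.fderiv {c : ℝ} {F : E → E} {A : Set E} (h : Expands c F A) {x : E} (hA : A ∈ 𝓝 x)
    {M : E →L[ℂ] E} (hM : HasFDerivAt F M x) (v : E) : c * ‖v‖ ≤ ‖M v‖ := by
  have h1 := (hM.lim v tendsto_norm_natCast).norm
  refine ge_of_tendsto h1 ?_
  filter_upwards [(tendsto_add_inv_smul x v).eventually hA, eventually_gt_atTop 0] with k hk hk0
  have h2 := h _ hk x (mem_of_mem_nhds hA)
  rw [add_sub_cancel_left, norm_smul, norm_inv] at h2
  rw [norm_smul]
  have hkp : 0 < ‖(k : ℂ)‖ := by rw [Complex.norm_natCast]; exact_mod_cast hk0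
  calc c * ‖v‖ = ‖(k : ℂ)‖ * (c * (‖(k : ℂ)‖⁻¹ * ‖v‖)) := by field_simp
    _ ≤ _ := by gcongr

lemma injective_of_norm_ge {c : ℝ} (hc : 0 < c) {M : E →L[ℂ] E} (h : ∀ v, c * ‖v‖ ≤ ‖M v‖) :
    Function.Injective M := by
  rw [injective_iff_map_eq_zero]
  intro v hv
  have := h v
  rw [hv, norm_zero] at this
  by_contra h0
  have := norm_pos_iff.mpr h0
  nlinarith

variable [FiniteDimensional ℂ E]

lemma surjective_of_injective {M : E →L[ℂ] E} (h : Function.Injective M) :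
    Function.Surjective M :=
  (LinearMap.injective_iff_surjective (f := (M : E →ₗ[ℂ] E))).mp h

lemma Expands.isOpen_image {c : ℝ} (hc : 0 < c) {F : E → E} {A : Set E} (h : Expands c F A)
    (hA : IsOpen A) (hF : ContDiffOn ℂ 1 F A) : IsOpen (F '' A) := by
  have := FiniteDimensional.complete ℂ E
  rw [isOpen_iff_mem_nhds]
  rintro _ ⟨x, hx, rfl⟩
  have hAx := hA.mem_nhds hx
  have h1 := (hF.contDiffAt hAx).hasStrictFDerivAt one_ne_zero
  have h2 := surjective_of_injective (injective_of_norm_ge hc (h.fderiv hAx h1.hasFDerivAt))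
  rw [← h1.map_nhds_eq_of_surj (LinearMap.range_eq_top.mpr h2)]
  exact image_mem_map hAx

/-- A connected set meeting the image of the open ball and missing the image of the sphere is
covered by the image of the open ball. -/
lemma cover {F : E → E} (hF : ContinuousOn F (closedBall 0 1)) (hopen : IsOpen (F '' ball 0 1))
    {Y : Set E} (hY : IsPreconnected Y) (hne : (Y ∩ F '' ball 0 1).Nonempty)
    (hs : ∀ z, ‖z‖ = 1 → F z ∉ Y) : Y ⊆ F '' ball 0 1 := by
  have := FiniteDimensional.proper ℂ E
  have hcl : IsClosed (F '' closedBall 0 1) :=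
    ((isCompact_closedBall 0 1).image_of_continuousOn hF).isClosed
  have hsplit : F '' closedBall 0 1 ∩ Y ⊆ F '' ball 0 1 := by
    rintro _ ⟨⟨z, hz, rfl⟩, hzY⟩
    refine ⟨z, ?_, rfl⟩
    have hz : ‖z‖ ≤ 1 := by simpa using hz
    rcases hz.lt_or_eq with h | h
    · simpa using h
    · exact absurd hzY (hs z h)
  by_contra hcon
  obtain ⟨y, hyY, hy⟩ := Set.not_subset.mp hcon
  have := hY _ _ hopen hcl.isOpen_compl (fun x hx => by
    by_cases h : x ∈ F '' closedBall 0 1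
    · exact Or.inl (hsplit ⟨h, hx⟩)
    · exact Or.inr h) hne ⟨y, hyY, fun h => hy (hsplit ⟨h, hyY⟩)⟩
  obtain ⟨x, hxY, h1, h2⟩ := this
  exact h2 (Set.image_mono ball_subset_closedBall h1)

omit [FiniteDimensional ℂ E] in
/-- First-order condition at `x` if moving in the direction `v` does not bring `F x` closer to `q`. -/
lemma re_inner_nonpos_of_min {F : E → E} {M : E →L[ℂ] E} {x q v : E} (hM : HasFDerivAt F M x)
    (hmin : ∀ᶠ k : ℕ in atTop, ‖F x - q‖ ≤ ‖F (x + ((k : ℂ))⁻¹ • v) - q‖) :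
    (⟪q - F x, M v⟫_ℂ).re ≤ 0 := by
  have h1 := hM.lim v tendsto_norm_natCast
  have hinv : Tendsto (fun k : ℕ => ((k : ℝ))⁻¹) atTop (𝓝 0) := tendsto_inv_atTop_nhds_zero_nat
  have h2 := (h1.norm.pow 2).mul hinv
  rw [mul_zero] at h2
  have h3 : Tendsto (fun k : ℕ => 2 * (⟪q - F x, (k : ℂ) • (F (x + ((k : ℂ))⁻¹ • v) - F x)⟫_ℂ).re)
      atTop (𝓝 (2 * (⟪q - F x, M v⟫_ℂ).re)) := by
    have : Continuous fun w : E => 2 * (⟪q - F x, w⟫_ℂ).re := by fun_prop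
    exact (this.tendsto (M v)).comp h1
  have h4 : 2 * (⟪q - F x, M v⟫_ℂ).re ≤ 0 := by
    refine le_of_tendsto_of_tendsto h3 h2 ?_
    filter_upwards [hmin, eventually_gt_atTop 0] with k hk hk0
    have hkp : (0 : ℝ) < k := by exact_mod_cast hk0
    set w := F (x + ((k : ℂ))⁻¹ • v)
    have e1 : ‖w - q‖ ^ 2 = ‖w - F x‖ ^ 2 - 2 * (⟪q - F x, w - F x⟫_ℂ).re + ‖F x - q‖ ^ 2 := by
      have : w - q = (w - F x) - (q - F x) := by abel
      rw [this, norm_sub_sq (𝕜 := ℂ), ← inner_conj_symm, norm_sub_rev q]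
      simp only [RCLike.re_to_complex, Complex.conj_re]
    have e2 := pow_le_pow_left₀ (norm_nonneg _) hk 2
    have e3 : (⟪q - F x, (k : ℂ) • (w - F x)⟫_ℂ).re = k * (⟪q - F x, w - F x⟫_ℂ).re := by
      rw [inner_smul_right, ← Complex.ofReal_natCast, Complex.re_ofReal_mul]
    rw [e3, norm_smul, Complex.norm_natCast, mul_pow]
    calc 2 * (k * (⟪q - F x, w - F x⟫_ℂ).re) = k * (2 * (⟪q - F x, w - F x⟫_ℂ).re) := by ring
      _ ≤ k * ‖w - F x‖ ^ 2 := by gcongr; linarith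
      _ = _ := by field_simp
  linarith

/-- At a boundary point `e` of the unit ball where `F` comes nearest to `q`, the outer normal
of the image points to `q`: the adjoint of the derivative maps `q - F e` to a positive multiple of
`e`. -/
lemma normal_of_min {F : E → E} {M : E →L[ℂ] E} {e q : E} (he : ‖e‖ = 1)
    (hM : HasFDerivAt F M e) (hinj : Function.Injective M) (hq : q ≠ F e)
    (hmin : ∀ z, ‖z‖ ≤ 1 → ‖F e - q‖ ≤ ‖F z - q‖) :
    ∃ a : ℝ, 0 < a ∧ ∀ v, ⟪q - F e, M v⟫_ℂ = a * ⟪e, v⟫_ℂ := by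
  have := FiniteDimensional.complete ℂ E
  set g := ContinuousLinearMap.adjoint M (q - F e) with hg
  have hgv : ∀ v, ⟪g, v⟫_ℂ = ⟪q - F e, M v⟫_ℂ := fun v => by
    rw [hg, ContinuousLinearMap.adjoint_inner_left]
  have h1 : ∀ v, (⟪e, v⟫_ℂ).re < 0 → (⟪g, v⟫_ℂ).re ≤ 0 := by
    intro v hv
    rw [hgv]
    apply re_inner_nonpos_of_min hM
    have hinv : Tendsto (fun k : ℕ => ((k : ℝ))⁻¹ * ‖v‖ ^ 2) atTop (𝓝 0) := by
      simpa using (tendsto_inv_atTop_nhds_zero_nat (𝕜 := ℝ)).mul_const (‖v‖ ^ 2)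
    filter_upwards [hinv.eventually_lt_const (u := -2 * (⟪e, v⟫_ℂ).re) (by linarith),
      eventually_gt_atTop 0] with k hk hk0
    have hkp : (0 : ℝ) < k := by exact_mod_cast hk0
    apply hmin
    apply le_of_sq_le_sq _ zero_le_one
    rw [norm_add_sq (𝕜 := ℂ), he, inner_smul_right, norm_smul, norm_inv, Complex.norm_natCast,
      ← Complex.ofReal_natCast, ← Complex.ofReal_inv]
    simp only [RCLike.re_to_complex, Complex.re_ofReal_mul]
    have hki : (0 : ℝ) < (k : ℝ)⁻¹ := by positivity
    nlinarith [mul_pos hki hki]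
  have h2 : ∀ v, (⟪e, v⟫_ℂ).re ≤ 0 → (⟪g, v⟫_ℂ).re ≤ 0 := by
    intro v hv
    by_contra! hcon
    set G := (⟪g, e⟫_ℂ).re
    have hx : 0 < (⟪g, v⟫_ℂ).re / (|G| + 1) / 2 := by positivity
    set x := (⟪g, v⟫_ℂ).re / (|G| + 1) / 2 with hxdef
    have h3 := h1 (v - (x : ℂ) • e) (by
      rw [inner_sub_right, inner_smul_right, inner_self_eq_norm_sq_to_K, he]
      simp
      linarith)
    rw [inner_sub_right, inner_smul_right, Complex.sub_re, Complex.re_ofReal_mul] at h3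
    have h4 : x * G ≤ x * |G| := by gcongr; exact le_abs_self G
    have h5 : x * (|G| + 1) * 2 = (⟪g, v⟫_ℂ).re := by rw [hxdef]; field_simp
    nlinarith [abs_nonneg G]
  set a := (⟪e, g⟫_ℂ).re with ha
  have hge : (⟪g, e⟫_ℂ).re = a := by rw [ha, ← inner_conj_symm, Complex.conj_re]
  have hee : ⟪e, e⟫_ℂ = 1 := by simp [inner_self_eq_norm_sq_to_K, he]
  have hgg : (⟪g, g⟫_ℂ).re = ‖g‖ ^ 2 := by
    rw [inner_self_eq_norm_sq_to_K]
    simp only [Complex.coe_algebraMap, ← Complex.ofReal_pow, Complex.ofReal_re]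
  have h3 : g = (a : ℂ) • e := by
    have e1 := h2 (g - (a : ℂ) • e) (by
      rw [inner_sub_right, inner_smul_right, hee, Complex.sub_re, Complex.re_ofReal_mul]
      simp [ha])
    rw [inner_sub_right, inner_smul_right, Complex.sub_re, Complex.re_ofReal_mul, hge, hgg] at e1
    have e2 : ‖g - (a : ℂ) • e‖ ^ 2 = ‖g‖ ^ 2 - a * a := by
      rw [norm_sub_sq (𝕜 := ℂ), inner_smul_right, norm_smul, he, Complex.norm_real,
        Real.norm_eq_abs]
      simp only [RCLike.re_to_complex, Complex.re_ofReal_mul, hge, mul_one, sq_abs]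
      ring
    have e3 : ‖g - (a : ℂ) • e‖ = 0 := by nlinarith [norm_nonneg (g - (a : ℂ) • e)]
    exact sub_eq_zero.mp (norm_eq_zero.mp e3)
  have ha0 : 0 ≤ a := by
    have := h2 (-e) (by rw [inner_neg_right, hee]; simp)
    rw [inner_neg_right, Complex.neg_re, hge] at this
    linarith
  have ha1 : a ≠ 0 := by
    intro h0
    rw [h0, Complex.ofReal_zero, zero_smul] at h3
    obtain ⟨v, hv⟩ := surjective_of_injective hinj (q - F e)
    have := hgv v
    rw [h3, hv, inner_zero_left] at this
    exact hq (sub_eq_zero.mp (inner_self_eq_zero.mp this.symm))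
  refine ⟨a, lt_of_le_of_ne ha0 (Ne.symm ha1), fun v => ?_⟩
  rw [← hgv, h3, inner_smul_left, Complex.conj_ofReal]

end BallExhaustion

/-! ### Attaching a bubble -/

namespace BallExhaustion
open scoped InnerProductSpace
open Filter Topology

variable {E : Type*} [NormedAddCommGroup E] [InnerProductSpace ℂ E]

/-- `F` is a holomorphic embedding of the open unit ball into `V` whose inverse is Lipschitz.
Holomorphy is encoded as complex `C¹`, the form in which the inverse function theorem uses it. -/
def Good (V : Set E) (F : E → E) : Prop :=
  ContDiffOn ℂ 1 F (ball 0 1) ∧ (∃ c > 0, Expands c F (ball 0 1)) ∧ ∀ z, ‖z‖ < 1 → F z ∈ V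

variable [FiniteDimensional ℂ E]

set_option maxHeartbeats 1000000 in
/-- If the closed ball `closedBall q r ⊆ V` meets `F(closedBall 0 1)` exactly at the boundary
point `F e`, adding a thin bubble at `e` makes the image swallow `closedBall q (r / 15)` while it
still contains `F(closedBall 0 s₁)`. -/
lemma core {V : Set E} (hV : IsOpen V) {R c : ℝ} (hR : 1 < R) (hc : 0 < c) {F : E → E}
    (hF : ContDiffOn ℂ 1 F (ball 0 R)) (hFc : Expands c F (ball 0 R))
    (hFV : ∀ z, ‖z‖ ≤ 1 → F z ∈ V) {e q : E} {r : ℝ} (he : ‖e‖ = 1) (hr : 0 < r)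
    (hq : ‖F e - q‖ = r) (hball : closedBall q r ⊆ V)
    (huniq : ∀ z, ‖z‖ ≤ 1 → z ≠ e → r < ‖F z - q‖) {s₁ : ℝ} (hs0 : 0 < s₁) (hs1 : s₁ < 1) :
    ∃ G, Good V G ∧ F '' closedBall 0 s₁ ⊆ G '' ball 0 1 ∧
      closedBall q (r / 15) ⊆ G '' ball 0 1 := by
  have := FiniteDimensional.proper ℂ E
  have hmemR : ∀ z : E, ‖z‖ ≤ 1 → z ∈ ball (0 : E) R := fun z hz => by
    simpa using hz.trans_lt hR
  have hnhds : ball (0 : E) R ∈ 𝓝 e := isOpen_ball.mem_nhds (hmemR e he.le)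
  have hFcont : ContinuousOn F (closedBall 0 1) :=
    hF.continuousOn.mono fun z hz => hmemR z (by simpa using hz)
  have hmin : ∀ z, ‖z‖ ≤ 1 → r ≤ ‖F z - q‖ := fun z hz => by
    rcases eq_or_ne z e with rfl | h
    · exact hq.ge
    · exact (huniq z hz h).le
  -- the linearisation at `e` and the frame attached to it
  set M := fderiv ℂ F e
  have hstrict : HasStrictFDerivAt F M e := (hF.contDiffAt hnhds).hasStrictFDerivAt one_ne_zero
  have hMinj : Function.Injective M :=
    injective_of_norm_ge hc (hFc.fderiv hnhds hstrict.hasFDerivAt)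
  have hqe : q ≠ F e := by
    rintro rfl; rw [sub_self, norm_zero] at hq; exact hr.ne hq
  obtain ⟨a, ha, haM⟩ := normal_of_min he hstrict.hasFDerivAt hMinj hqe
    (fun z hz => by rw [hq]; exact hmin z hz)
  have hrC : (r : ℂ) ≠ 0 := by exact_mod_cast hr.ne'
  set n := ((r : ℂ))⁻¹ • (q - F e) with hn_def
  have hrn : (r : ℂ) • n = q - F e := by rw [hn_def, smul_smul, mul_inv_cancel₀ hrC, one_smul]
  have hn : ‖n‖ = 1 := by
    rw [hn_def, norm_smul, norm_sub_rev, hq, norm_inv, Complex.norm_real, Real.norm_eq_abs,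
      abs_of_pos hr, inv_mul_cancel₀ hr.ne']
  have hnM : ∀ v, ⟪n, M v⟫_ℂ = ((a / r : ℝ) : ℂ) * ⟪e, v⟫_ℂ := fun v => by
    rw [hn_def, inner_smul_left, haM, ← Complex.ofReal_inv, Complex.conj_ofReal]
    push_cast; ring
  obtain ⟨W, hW, hWn, l, hl, hlW⟩ := exists_frame he hn hMinj hnM
  obtain ⟨C₁, hC₁, hC₁'⟩ := bubble_antilip he hn hW hWn (div_pos ha hr) hl
    (K := 4 / 3 * r) (by positivity) hnM hlW
  -- `σ₀`: heights below `σ₀` are governed by the linearisation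
  obtain ⟨ρ, hρ, hρ'⟩ : ∃ ρ > 0, ∀ x y, ‖x - e‖ < ρ → ‖y - e‖ < ρ →
      ‖F x - F y - M (x - y)‖ ≤ 1 / (2 * C₁) * ‖x - y‖ := by
    have h1 := hstrict.isLittleO.bound (show (0 : ℝ) < 1 / (2 * C₁) by positivity)
    obtain ⟨ρ, hρ, h⟩ := Metric.eventually_nhds_iff.mp h1
    refine ⟨ρ, hρ, fun x y hx hy => ?_⟩
    have := @h (x, y) (by
      rw [Prod.dist_eq]; simpa only [dist_eq_norm] using max_lt hx hy)
    exact this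
  set h : E → ℝ := fun z => 1 - (⟪e, z⟫_ℂ).re with hh
  have hpole : ∀ z, ‖z‖ ≤ 1 → ‖z - e‖ ^ 2 ≤ 2 * h z := fun z hz => norm_sub_pole_sq_le he hz
  have hheight : ∀ z, 1 - ‖z‖ ≤ h z := fun z => by
    have := (Complex.re_le_norm _).trans (norm_inner_le' he z)
    simp only [hh]; linarith
  have hhcont : Continuous h := by fun_prop
  obtain ⟨σ₀, hσ₀, hσ₀s, hσ₀ρ⟩ : ∃ σ₀ > 0, σ₀ ≤ 1 - s₁ ∧ 2 * σ₀ ≤ ρ ^ 2 :=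
    ⟨min (1 - s₁) (ρ ^ 2 / 2), lt_min (by linarith) (by positivity), min_le_left _ _, by
      linarith [min_le_right (1 - s₁) (ρ ^ 2 / 2)]⟩
  obtain ⟨r', hr', hfar⟩ : ∃ r', r < r' ∧ ∀ y ∈ closedBall (0 : E) 1 ∩ {z | σ₀ ≤ h z},
      r' ≤ ‖F y - q‖ := by
    apply IsCompact.exists_forall_le'
    · exact (isCompact_closedBall 0 1).inter_right (isClosed_le continuous_const hhcont)
    · exact ((hFcont.sub continuousOn_const).norm).mono Set.inter_subset_left
    · rintro y ⟨hy, hy'⟩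
      apply huniq y (by simpa using hy)
      rintro rfl
      have : h y = 0 := by simp [hh, inner_self_eq_norm_sq_to_K, he]
      simp only [Set.mem_ofPred_eq] at hy'
      linarith
  -- `μ`: by uniqueness of the nearest point, `F` keeps this extra distance from `q` above `σ₀`
  set μ := r' - r with hμ
  have hμ0 : 0 < μ := by linarith
  -- `η`: the tolerated perturbation
  obtain ⟨δ, hδ, hδV⟩ : ∃ δ, 0 < δ ∧
      cthickening δ (closedBall q r ∪ F '' closedBall 0 1) ⊆ V := by
    apply IsCompact.exists_cthickening_subset_open _ hV
    · apply Set.union_subset hball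
      rintro _ ⟨z, hz, rfl⟩
      exact hFV z (by simpa using hz)
    · exact (isCompact_closedBall _ _).union ((isCompact_closedBall 0 1).image_of_continuousOn hFcont)
  obtain ⟨η, hη, hημ, hηr, hηδ⟩ : ∃ η > 0, 3 * η ≤ μ ∧ 30 * η ≤ r ∧ η ≤ δ := by
    refine ⟨min (μ / 3) (min (r / 30) δ), by positivity, ?_, ?_, ?_⟩
    · linarith [min_le_left (μ / 3) (min (r / 30) δ)]
    · linarith [(min_le_right (μ / 3) (min (r / 30) δ)).trans (min_le_left _ _)]
    · exact (min_le_right (μ / 3) (min (r / 30) δ)).trans (min_le_right _ _)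
  -- `σ₁`: heights below `σ₁` are so close to the pole that `F` hardly moves there
  obtain ⟨σ₁, hσ₁, hσ₁₀, hnear⟩ : ∃ σ₁ > 0, σ₁ ≤ σ₀ ∧
      ∀ z, ‖z‖ ≤ 1 → h z < σ₁ → ‖F z - F e‖ ≤ η := by
    obtain ⟨ρ₁, hρ₁, h1⟩ := Metric.continuousAt_iff.mp hstrict.hasFDerivAt.continuousAt η hη
    refine ⟨min σ₀ (ρ₁ ^ 2 / 2), by positivity, min_le_left _ _, fun z hz hz' => ?_⟩
    have h2 : ‖z - e‖ < ρ₁ := by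
      apply lt_of_pow_lt_pow_left₀ 2 hρ₁.le
      have := hpole z hz
      have := hz'.trans_le (min_le_right _ _)
      linarith
    have := h1 (by rwa [dist_eq_norm])
    rw [dist_eq_norm] at this
    exact this.le
  obtain ⟨C, hC, hCs⟩ := bubble_far he hn hW (K := 4 / 3 * r) (by positivity) hσ₁
  have hballs1 : ball (0 : E) s₁ ⊆ ball 0 R := ball_subset_ball (by linarith)
  obtain ⟨ε, hε, hεF⟩ : ∃ ε > 0, ball (F 0) ε ⊆ F '' ball 0 s₁ := by
    have h1 := (hFc.mono hballs1).isOpen_image hc isOpen_ball (hF.mono hballs1)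
    exact Metric.isOpen_iff.mp h1 _ ⟨0, by simpa using hs0, rfl⟩
  -- `t`: the admissible size and Lipschitz constant of the bubble above height `σ₁`
  obtain ⟨t, ht, htη, htc, htc', htε⟩ : ∃ t > 0, t ≤ η ∧ 2 * t ≤ c ∧ 2 * t ≤ c * (1 - s₁) ∧
      2 * t ≤ ε := by
    have : 0 < c * (1 - s₁) := mul_pos hc (by linarith)
    refine ⟨min η (min (c / 2) (min (c * (1 - s₁) / 2) (ε / 2))), by positivity, min_le_left _ _,
      ?_, ?_, ?_⟩
    · linarith [(min_le_right η (min (c / 2) (min (c * (1 - s₁) / 2) (ε / 2)))).trans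
        (min_le_left _ _)]
    · linarith [((min_le_right η (min (c / 2) (min (c * (1 - s₁) / 2) (ε / 2)))).trans
        (min_le_right _ _)).trans (min_le_left _ _)]
    · linarith [((min_le_right η (min (c / 2) (min (c * (1 - s₁) / 2) (ε / 2)))).trans
        (min_le_right _ _)).trans (min_le_right _ _)]
  obtain ⟨s, hs, hs4, hsσ, hst⟩ : ∃ s > 0, s ≤ 1 / 4 ∧ s ≤ σ₁ ∧ C * s ≤ t := by
    refine ⟨min (1 / 4) (min σ₁ (t / C)), by positivity, min_le_left _ _,
      (min_le_right _ _).trans (min_le_left _ _), ?_⟩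
    have := ((min_le_right (1 / 4) (min σ₁ (t / C)))).trans (min_le_right _ _)
    rw [le_div_iff₀ hC] at this
    linarith
  have hs16 : s ^ 2 ≤ 1 / 16 := by
    have := pow_le_pow_left₀ hs.le hs4 2
    norm_num at this ⊢; exact this
  have hsσ2 : s ^ 2 ≤ 1 / 4 * σ₁ := by
    rw [sq]; exact mul_le_mul hs4 hsσ hs.le (by norm_num)
  obtain ⟨hfar1, hfar2⟩ := hCs s hs
  set B := bubble e n W (4 / 3 * r) s with hB
  set G : E → E := fun z => F z + B z with hG
  have hBball : ∀ z, ‖z‖ ≤ 1 → ‖B z - (r : ℂ) • n‖ ≤ r := fun z hz =>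
    bubble_mem_ball he hn hW hWn hr hs hz
  have hGq : ∀ z, G z - q = (F z - F e) + (B z - (r : ℂ) • n) := fun z => by
    rw [hrn, hG]; simp only; abel
  have hGnear : ∀ z, ‖z‖ ≤ 1 → h z < σ₁ → ‖G z - q‖ ≤ r + η := fun z hz hz' => by
    rw [hGq]
    linarith [norm_add_le (F z - F e) (B z - (r : ℂ) • n), hnear z hz hz', hBball z hz]
  have hGfar : ∀ z, ‖z‖ ≤ 1 → σ₁ ≤ h z → ‖G z - F z‖ ≤ t := fun z hz hz' => by
    have : G z - F z = B z := by simp [hG]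
    rw [this]; exact (hfar1 z hz hz').trans hst
  have hFfar : ∀ z, ‖z‖ ≤ 1 → σ₀ ≤ h z → r + μ ≤ ‖F z - q‖ := fun z hz hz' => by
    rw [hμ, add_sub_cancel]
    exact hfar z ⟨by simpa using hz, hz'⟩
  have hGV : ∀ z, ‖z‖ ≤ 1 → G z ∈ V := by
    intro z hz
    apply hδV
    rcases lt_or_ge (h z) σ₁ with hz' | hz'
    · refine mem_cthickening_of_dist_le _ (F e + B z) _ _ (Or.inl ?_) ?_
      · rw [mem_closedBall, dist_eq_norm]
        have : F e + B z - q = B z - (r : ℂ) • n := by rw [hrn]; abel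
        rw [this]; exact hBball z hz
      · rw [dist_eq_norm]
        have : G z - (F e + B z) = F z - F e := by simp [hG]
        rw [this]; exact (hnear z hz hz').trans hηδ
    · apply mem_cthickening_of_dist_le _ (F z) _ _ (Or.inr ⟨z, by simpa using hz, rfl⟩)
      rw [dist_eq_norm]
      exact (hGfar z hz hz').trans (htη.trans hηδ)
  -- one point in the blob about `q`, the other far from the pole: the images are separated
  have hmixed : ∀ z y, ‖z‖ ≤ 1 → ‖y‖ ≤ 1 → h z < σ₁ → σ₀ ≤ h y →
      μ / 6 * ‖z - y‖ ≤ ‖G z - G y‖ := by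
    intro z y hz hy hz' hy'
    have h1 := hGnear z hz hz'
    have h2 := hFfar y hy hy'
    have h3 := hGfar y hy (hσ₁₀.trans hy')
    have h4 : ‖F y - q‖ ≤ ‖G y - F y‖ + ‖G z - G y‖ + ‖G z - q‖ := by
      have : F y - q = -(G y - F y) + -(G z - G y) + (G z - q) := by abel
      rw [this]
      refine (norm_add_le _ _).trans (add_le_add ((norm_add_le _ _).trans ?_) le_rfl)
      rw [norm_neg, norm_neg]
    have h5 : ‖z - y‖ ≤ 2 := by linarith [norm_sub_le z y]
    nlinarith
  -- both points below `σ₀`, both above `σ₁`, or one on each side; `σ₁ ≤ σ₀` exhausts all cases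
  have hcase : ∀ z y, ‖z‖ ≤ 1 → ‖y‖ ≤ 1 →
      1 / (2 * C₁) * ‖z - y‖ ≤ ‖G z - G y‖ ∨ c / 2 * ‖z - y‖ ≤ ‖G z - G y‖ ∨
        μ / 6 * ‖z - y‖ ≤ ‖G z - G y‖ := by
    intro z y hz hy
    by_cases hA : h z < σ₀ ∧ h y < σ₀
    · left
      have hclose : ∀ w, ‖w‖ ≤ 1 → h w < σ₀ → ‖w - e‖ < ρ := fun w hw hw' => by
        apply lt_of_pow_lt_pow_left₀ 2 hρ.le
        linarith [hpole w hw]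
      have h1 := hρ' z y (hclose z hz hA.1) (hclose y hy hA.2)
      have h2 := hC₁' s hs z y hz hy
      have h3 : ‖M (z - y) + (B z - B y)‖ ≤ ‖G z - G y‖ + 1 / (2 * C₁) * ‖z - y‖ := by
        have : M (z - y) + (B z - B y) = (G z - G y) - (F z - F y - M (z - y)) := by
          simp only [hG]; abel
        rw [this]
        exact (norm_sub_le _ _).trans (by linarith)
      have h4 : ‖z - y‖ ≤ C₁ * ‖G z - G y‖ + ‖z - y‖ / 2 := by
        calc _ ≤ C₁ * (‖G z - G y‖ + 1 / (2 * C₁) * ‖z - y‖) := h2.trans (by gcongr)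
          _ = _ := by field_simp
      rw [one_div, inv_mul_le_iff₀ (by positivity)]
      linarith
    · right
      by_cases hA' : σ₁ ≤ h z ∧ σ₁ ≤ h y
      · left
        have h1 := hfar2 z y hz hy hA'.1 hA'.2
        have h2 := hFc z (hmemR z hz) y (hmemR y hy)
        have h3 : ‖F z - F y‖ ≤ ‖G z - G y‖ + ‖B z - B y‖ := by
          have : F z - F y = (G z - G y) - (B z - B y) := by simp only [hG]; abel
          rw [this]; exact norm_sub_le _ _
        have h4 : C * s * ‖z - y‖ ≤ c / 2 * ‖z - y‖ := by gcongr; linarith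
        linarith
      · right
        rcases lt_or_ge (h z) σ₁ with hz' | hz'
        · refine hmixed z y hz hy hz' ?_
          by_contra! hy'
          exact hA ⟨hz'.trans_le hσ₁₀, hy'⟩
        · have hy' : h y < σ₁ := by
            by_contra! hy'
            exact hA' ⟨hz', hy'⟩
          rw [norm_sub_rev, norm_sub_rev (G z)]
          refine hmixed y z hy hz hy' ?_
          by_contra! hz''
          exact hA ⟨hz'', hy'.trans_le hσ₁₀⟩
  set c' := min (1 / (2 * C₁)) (min (c / 2) (μ / 6)) with hc'
  have hc'0 : 0 < c' := by positivity
  have hexp : Expands c' G (closedBall 0 1) := by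
    intro z hz y hy
    rcases hcase z y (by simpa using hz) (by simpa using hy) with h1 | h1 | h1
    · refine le_trans ?_ h1; gcongr; exact min_le_left _ _
    · refine le_trans ?_ h1; gcongr; exact (min_le_right _ _).trans (min_le_left _ _)
    · refine le_trans ?_ h1; gcongr; exact (min_le_right _ _).trans (min_le_right _ _)
  have hGdiff : ContDiffOn ℂ 1 G (closedBall 0 1) :=
    (hF.mono fun z hz => hmemR z (by simpa using hz)).add (contDiffOn_bubble he hs)
  have hopen : IsOpen (G '' ball 0 1) := (hexp.mono ball_subset_closedBall).isOpen_image hc'0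
    isOpen_ball (hGdiff.mono ball_subset_closedBall)
  refine ⟨G, ⟨hGdiff.mono ball_subset_closedBall, ⟨c', hc'0, hexp.mono ball_subset_closedBall⟩,
    fun z hz => hGV z hz.le⟩, ?_, ?_⟩
  · refine cover hGdiff.continuousOn hopen ?_ ?_ ?_
    · exact (convex_closedBall (0 : E) s₁).isPreconnected.image _
        (hFcont.mono (closedBall_subset_closedBall hs1.le))
    · refine ⟨G 0, ?_, 0, by simp, rfl⟩
      have h1 : G 0 ∈ F '' ball 0 s₁ := by
        apply hεF
        rw [mem_ball, dist_eq_norm]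
        have := hGfar 0 (by simp) (by
          have := hheight 0
          rw [norm_zero] at this; linarith)
        linarith
      exact Set.image_mono ball_subset_closedBall h1
    · rintro z hz ⟨y, hy, hyz⟩
      have hy : ‖y‖ ≤ s₁ := by simpa using hy
      have hyσ : σ₀ ≤ h y := by linarith [hheight y]
      rcases lt_or_ge (h z) σ₁ with hz' | hz'
      · have h1 := hGnear z hz.le hz'
        have h2 := hFfar y (hy.trans hs1.le) hyσ
        rw [hyz] at h2
        linarith
      · have h1 := hGfar z hz.le hz'
        rw [← hyz] at h1
        have h2 := hFc y (hmemR y (hy.trans hs1.le)) z (hmemR z hz.le)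
        have h3 : 1 - s₁ ≤ ‖y - z‖ := by
          rw [norm_sub_rev]; linarith [norm_sub_norm_le z y]
        nlinarith
  · refine cover hGdiff.continuousOn hopen (convex_closedBall q _).isPreconnected ?_ ?_
    · have hz0 : ‖(1 - 7 / 9 * (s : ℂ) ^ 2) • e‖ = 1 - 7 / 9 * s ^ 2 := by
        rw [norm_smul, he, mul_one]
        have : (1 - 7 / 9 * (s : ℂ) ^ 2) = ((1 - 7 / 9 * s ^ 2 : ℝ) : ℂ) := by push_cast; ring
        rw [this, Complex.norm_real, Real.norm_eq_abs, abs_of_nonneg]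
        linarith
      have hs2 : 0 < s ^ 2 := by positivity
      refine ⟨G ((1 - 7 / 9 * (s : ℂ) ^ 2) • e), ?_, _, ?_, rfl⟩
      · rw [mem_closedBall, dist_eq_norm, hGq, hB, bubble_center he hs, sub_self, add_zero]
        have := hnear ((1 - 7 / 9 * (s : ℂ) ^ 2) • e) (by rw [hz0]; linarith) (by
          simp only [hh]
          rw [inner_smul_right, inner_self_eq_norm_sq_to_K, he]
          have : (1 - 7 / 9 * (s : ℂ) ^ 2) = ((1 - 7 / 9 * s ^ 2 : ℝ) : ℂ) := by push_cast; ring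
          rw [this, Complex.re_ofReal_mul]
          simp
          linarith)
        linarith
      · rw [mem_ball_zero_iff, hz0]; linarith
    · intro z hz hzq
      rw [mem_closedBall, dist_eq_norm] at hzq
      rcases lt_or_ge (h z) σ₁ with hz' | hz'
      · have h1 := bubble_sphere he hn hW hWn hr hs (by linarith) hz
        have h2 := hnear z hz.le hz'
        have h3 : ‖B z - (r : ℂ) • n‖ ≤ ‖G z - q‖ + ‖F z - F e‖ := by
          have : B z - (r : ℂ) • n = (G z - q) - (F z - F e) := by rw [hGq]; abel
          rw [this]; exact norm_sub_le _ _
        linarith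
      · have h1 := hGfar z hz.le hz'
        have h2 := hmin z hz.le
        have h3 : ‖F z - q‖ ≤ ‖G z - q‖ + ‖G z - F z‖ := by
          have : F z - q = (G z - q) - (G z - F z) := by abel
          rw [this]; exact norm_sub_le _ _
        linarith

end BallExhaustion

/-! ### Swallowing balls -/

namespace BallExhaustion
open scoped InnerProductSpace
open Filter Topology

variable {E : Type*} [NormedAddCommGroup E] [InnerProductSpace ℂ E]

/-- Some holomorphic embedding of the ball into `V`, with Lipschitz inverse, covers `Y`. -/
def Swallows (V Y : Set E) : Prop := ∃ F, Good V F ∧ Y ⊆ F '' ball 0 1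

lemma Good.mono {V V' : Set E} {F : E → E} (h : Good V F) (hV : V ⊆ V') : Good V' F :=
  ⟨h.1, h.2.1, fun z hz => hV (h.2.2 z hz)⟩

lemma Swallows.mono {V V' Y Y' : Set E} (h : Swallows V Y) (hV : V ⊆ V') (hY : Y' ⊆ Y) :
    Swallows V' Y' := by
  obtain ⟨F, hF, hFY⟩ := h
  exact ⟨F, hF.mono hV, hY.trans hFY⟩

lemma Swallows.subset {V Y : Set E} (h : Swallows V Y) : Y ⊆ V := by
  obtain ⟨F, hF, hFY⟩ := h
  intro y hy
  obtain ⟨z, hz, rfl⟩ := hFY hy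
  exact hF.2.2 z (by simpa using hz)

lemma norm_real_smul {s : ℝ} (hs : 0 < s) (z : E) : ‖(s : ℂ) • z‖ = s * ‖z‖ := by
  rw [norm_smul, Complex.norm_real, Real.norm_eq_abs, abs_of_pos hs]

lemma smul_mem_ball {s : ℝ} (hs : 0 < s) {z : E} (hz : z ∈ ball (0 : E) (1 / s)) :
    (s : ℂ) • z ∈ ball (0 : E) 1 := by
  rw [mem_ball_zero_iff] at hz ⊢
  rw [norm_real_smul hs]
  rwa [lt_div_iff₀ hs, mul_comm] at hz

lemma contDiffOn_comp_smul {F : E → E} (h : ContDiffOn ℂ 1 F (ball 0 1)) {s : ℝ} (hs : 0 < s) :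
    ContDiffOn ℂ 1 (fun z => F ((s : ℂ) • z)) (ball 0 (1 / s)) :=
  h.comp (contDiff_const_smul (s : ℂ)).contDiffOn fun _ hz => smul_mem_ball hs hz

lemma Expands.comp_smul {F : E → E} {c : ℝ} (h : Expands c F (ball 0 1)) {s : ℝ} (hs : 0 < s) :
    Expands (c * s) (fun z => F ((s : ℂ) • z)) (ball 0 (1 / s)) := by
  intro x hx y hy
  have := h _ (smul_mem_ball hs hx) _ (smul_mem_ball hs hy)
  rw [← smul_sub, norm_real_smul hs] at this
  linarith

lemma image_comp_smul {F : E → E} {s : ℝ} (hs : 0 < s) {A B : Set E}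
    (hAB : ∀ z ∈ A, ((s : ℂ))⁻¹ • z ∈ B) : F '' A ⊆ (fun z => F ((s : ℂ) • z)) '' B := by
  rintro _ ⟨z, hz, rfl⟩
  refine ⟨_, hAB z hz, ?_⟩
  have : (s : ℂ) ≠ 0 := by exact_mod_cast hs.ne'
  simp only [smul_smul, mul_inv_cancel₀ this, one_smul]

lemma norm_inv_real_smul {s : ℝ} (hs : 0 < s) (z : E) : ‖((s : ℂ))⁻¹ • z‖ = ‖z‖ / s := by
  rw [norm_smul, norm_inv, Complex.norm_real, Real.norm_eq_abs, abs_of_pos hs, div_eq_inv_mul]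

variable [FiniteDimensional ℂ E]

/-- A compact set covered by the image of the ball is covered by the image of a smaller ball. -/
lemma Good.exists_radius {V Y : Set E} {F : E → E} (h : Good V F) (hY : IsCompact Y)
    (hFY : Y ⊆ F '' ball 0 1) : ∃ s, 0 < s ∧ s < 1 ∧ Y ⊆ F '' ball 0 s := by
  obtain ⟨hF, ⟨c, hc, hFc⟩, -⟩ := h
  let t : ℕ → ℝ := fun k => 1 - 1 / ((k : ℝ) + 2)
  have ht1 : ∀ k, t k < 1 := fun k => by
    have : (0 : ℝ) < 1 / ((k : ℝ) + 2) := by positivity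
    simp only [t]; linarith
  have ht0 : ∀ k, 0 < t k := fun k => by
    have : 1 / ((k : ℝ) + 2) < 1 := by
      rw [div_lt_one (by positivity)]; linarith [(Nat.cast_nonneg k : (0 : ℝ) ≤ k)]
    simp only [t]; linarith
  have hsub : ∀ k, ball (0 : E) (t k) ⊆ ball 0 1 := fun k => ball_subset_ball (ht1 k).le
  have hmono : Monotone t := by
    intro j k hjk
    have : (j : ℝ) ≤ k := by exact_mod_cast hjk
    simp only [t]
    gcongr
  obtain ⟨k, hk⟩ := hY.elim_directed_cover (fun k => F '' ball 0 (t k))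
    (fun k => (hFc.mono (hsub k)).isOpen_image hc isOpen_ball (hF.mono (hsub k)))
    (by
      intro y hy
      obtain ⟨z, hz, rfl⟩ := hFY hy
      rw [mem_ball_zero_iff] at hz
      obtain ⟨k, hk⟩ := exists_nat_one_div_lt (sub_pos.mpr hz)
      refine Set.mem_iUnion.mpr ⟨k, z, ?_, rfl⟩
      rw [mem_ball_zero_iff]
      have : 1 / ((k : ℝ) + 2) ≤ 1 / ((k : ℝ) + 1) := by gcongr; norm_num
      simp only [t]; linarith)
    (directed_of_isDirected_le fun j k hjk => Set.image_mono (ball_subset_ball (hmono hjk)))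
  exact ⟨t k, ht0 k, ht1 k, hk⟩

/-- The bubble construction at a point `F z₀` of `F(closedBall 0 s)` nearest to `q`. Moving `q`
slightly towards `F z₀` makes the nearest point unique. -/
lemma bubble_step {V : Set E} (hV : IsOpen V) {F : E → E} (hF : Good V F) {s₁ s : ℝ}
    (hs₁ : 0 < s₁) (hs₁s : s₁ < s) (hs : s < 1) {q z₀ : E} (hz₀ : ‖z₀‖ ≤ s)
    (hmin : ∀ z, ‖z‖ ≤ s → ‖F z₀ - q‖ ≤ ‖F z - q‖) (hq : F z₀ ≠ q)
    (hball : closedBall q ‖F z₀ - q‖ ⊆ V) :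
    ∃ G, Good V G ∧ F '' closedBall 0 s₁ ⊆ G '' ball 0 1 ∧
      closedBall q (‖F z₀ - q‖ / 16) ⊆ G '' ball 0 1 := by
  obtain ⟨hFd, ⟨c, hc, hFc⟩, hFV⟩ := hF
  have hs0 : 0 < s := hs₁.trans hs₁s
  have hsC : (s : ℂ) ≠ 0 := by exact_mod_cast hs0.ne'
  set p := F z₀ with hp
  set r := ‖p - q‖ with hr
  have hr0 : 0 < r := norm_pos_iff.mpr (sub_ne_zero.mpr hq)
  -- the nearest point is on the sphere, since the derivative of `F` is surjective
  have hz₀s : ‖z₀‖ = s := by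
    by_contra hne
    have hlt : ‖z₀‖ < s := lt_of_le_of_ne hz₀ hne
    have hnh : ball (0 : E) 1 ∈ 𝓝 z₀ := isOpen_ball.mem_nhds (by simpa using hlt.trans hs)
    have hd : HasFDerivAt F (fderiv ℂ F z₀) z₀ :=
      ((hFd.contDiffAt hnh).hasStrictFDerivAt one_ne_zero).hasFDerivAt
    obtain ⟨v, hv⟩ := surjective_of_injective
      (injective_of_norm_ge hc (hFc.fderiv hnh hd)) (q - p)
    have h1 := re_inner_nonpos_of_min hd (q := q) (v := v) (by
      have h2 : ball (0 : E) s ∈ 𝓝 z₀ := isOpen_ball.mem_nhds (by simpa using hlt)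
      filter_upwards [(tendsto_add_inv_smul z₀ v).eventually h2] with k hk
      exact hmin _ (by rw [dist_zero_right] at hk; exact hk.le))
    rw [hv, ← hp, inner_self_eq_norm_sq_to_K, norm_sub_rev, ← hr] at h1
    simp only [Complex.coe_algebraMap, ← Complex.ofReal_pow, Complex.ofReal_re] at h1
    nlinarith
  set e := ((s : ℂ))⁻¹ • z₀ with he_def
  have he : ‖e‖ = 1 := by rw [he_def, norm_inv_real_smul hs0, hz₀s, div_self hs0.ne']
  set F₁ : E → E := fun z => F ((s : ℂ) • z) with hF₁
  have hF₁e : F₁ e = p := by simp only [hF₁, he_def, smul_smul, mul_inv_cancel₀ hsC, one_smul, hp]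
  -- any `t < 1` with `t / 15 - (1 - t) ≥ 1 / 16` would do
  set t : ℝ := 999 / 1000 with ht
  set q' := p + (t : ℂ) • (q - p) with hq'
  have hqq' : ‖q' - q‖ = (1 - t) * r := by
    have : q' - q = ((1 - t : ℝ) : ℂ) • (p - q) := by rw [hq']; push_cast; module
    rw [this, norm_smul, Complex.norm_real, Real.norm_eq_abs, abs_of_pos (by norm_num [ht])]
  have hpq' : ‖F₁ e - q'‖ = t * r := by
    have : F₁ e - q' = (t : ℂ) • (p - q) := by rw [hF₁e, hq']; module
    rw [this, norm_smul, Complex.norm_real, Real.norm_eq_abs, abs_of_pos (by norm_num [ht])]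
  have hsub : ∀ z : E, ‖z‖ ≤ 1 → ‖(s : ℂ) • z‖ ≤ s := fun z hz => by
    rw [norm_real_smul hs0]; nlinarith
  have hR : 1 < 1 / s := by rw [lt_div_iff₀ hs0]; linarith
  have hmemR : ∀ z : E, ‖z‖ ≤ 1 → z ∈ ball (0 : E) (1 / s) := fun z hz => by
    rw [mem_ball_zero_iff]; linarith
  have hex := hFc.comp_smul hs0
  obtain ⟨G, hG, h1, h2⟩ := core hV hR (mul_pos hc hs0) (contDiffOn_comp_smul hFd hs0)
    hex (fun z hz => hFV _ ((hsub z hz).trans_lt hs)) he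
    (r := t * r) (by positivity) hpq'
    (by
      refine (closedBall_subset_closedBall' ?_).trans hball
      rw [dist_eq_norm, hqq']
      linarith)
    (by
      intro z hz hze
      have hne : F₁ z - p ≠ 0 := by
        rw [sub_ne_zero, ← hF₁e]
        exact fun h => hze (hex.injOn (mul_pos hc hs0) (hmemR z hz) (hmemR e he.le) h)
      have hx : 0 < ‖F₁ z - p‖ := norm_pos_iff.mpr hne
      have e1 : ∀ τ : ℝ, ‖F₁ z - (p + (τ : ℂ) • (q - p))‖ ^ 2 =
          ‖F₁ z - p‖ ^ 2 - 2 * (τ * (⟪F₁ z - p, q - p⟫_ℂ).re) + τ ^ 2 * r ^ 2 := fun τ => by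
        rw [← sub_sub, norm_sub_sq (𝕜 := ℂ), inner_smul_right, norm_smul, Complex.norm_real,
          Real.norm_eq_abs, norm_sub_rev q, ← hr, mul_pow, sq_abs]
        simp only [RCLike.re_to_complex, Complex.re_ofReal_mul]
      have e2 := e1 1
      rw [Complex.ofReal_one, one_smul, add_sub_cancel] at e2
      have e3 := pow_le_pow_left₀ (norm_nonneg _) (hmin _ (hsub z hz)) 2
      have e4 := e1 t
      change r ^ 2 ≤ ‖F₁ z - q‖ ^ 2 at e3
      apply lt_of_pow_lt_pow_left₀ 2 (norm_nonneg _)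
      change (t * r) ^ 2 < ‖F₁ z - q'‖ ^ 2
      rw [hq', e4]
      have : 0 < ‖F₁ z - p‖ ^ 2 := by positivity
      rw [ht]
      nlinarith)
    (s₁ := s₁ / s) (by positivity) (by rw [div_lt_one hs0]; exact hs₁s)
  refine ⟨G, hG, (image_comp_smul hs0 ?_).trans h1, Set.Subset.trans ?_ h2⟩
  · intro z hz
    rw [mem_closedBall_zero_iff] at hz ⊢
    rw [norm_inv_real_smul hs0]
    gcongr
  · apply closedBall_subset_closedBall'
    rw [dist_comm, dist_eq_norm, hqq', ht]
    linarith

/-- If the closed ball about `q` through a point of `Y` lies in `V`, one can swallow in addition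
a ball about `q` whose radius is `1/16` of any lower bound `d` for the distance from `q` to the
former ambient set `V₀`. -/
lemma Swallows.bubble {V₀ V Y : Set E} (hV : IsOpen V) (hV₀ : V₀ ⊆ V) (hY : IsCompact Y)
    (h : Swallows V₀ Y) {x q : E} (hx : x ∈ Y) (hball : closedBall q ‖x - q‖ ⊆ V) {d : ℝ}
    (hd : ∀ w ∈ V₀, d ≤ ‖w - q‖) : Swallows V (Y ∪ closedBall q (d / 16)) := by
  have := FiniteDimensional.proper ℂ E
  obtain ⟨F, hF, hFY⟩ := h
  obtain ⟨s₁, hs₁, hs₁1, hYs⟩ := hF.exists_radius hY hFY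
  set s := (s₁ + 1) / 2 with hs_def
  have hs₁s : s₁ < s := by linarith
  have hs : s < 1 := by linarith
  have hne : (closedBall (0 : E) s).Nonempty := ⟨0, by simp; linarith⟩
  have hsub : closedBall (0 : E) s ⊆ ball 0 1 := closedBall_subset_ball hs
  have hcont : ContinuousOn F (closedBall 0 s) := hF.1.continuousOn.mono hsub
  obtain ⟨z₀, hz₀, hmin⟩ := (isCompact_closedBall (0 : E) s).exists_isMinOn hne
    ((hcont.sub continuousOn_const).norm (f := fun z => F z - q))
  rw [mem_closedBall_zero_iff] at hz₀
  have hmin' : ∀ z, ‖z‖ ≤ s → ‖F z₀ - q‖ ≤ ‖F z - q‖ := fun z hz =>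
    hmin (show z ∈ closedBall (0 : E) s by simpa using hz)
  have hdr : d ≤ ‖F z₀ - q‖ := hd _ (hF.2.2 z₀ (hz₀.trans_lt hs))
  by_cases hq : F z₀ = q
  · refine ⟨F, hF.mono hV₀, Set.union_subset hFY ?_⟩
    intro w hw
    rw [hq, sub_self, norm_zero] at hdr
    rw [mem_closedBall, dist_eq_norm] at hw
    have h0 : ‖w - q‖ ≤ 0 := by linarith
    rw [sub_eq_zero.mp (norm_le_zero_iff.mp h0), ← hq]
    exact ⟨z₀, by simpa using hz₀.trans_lt hs, rfl⟩
  · have hrx : ‖F z₀ - q‖ ≤ ‖x - q‖ := by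
      obtain ⟨z, hz, rfl⟩ := hYs hx
      rw [mem_ball_zero_iff] at hz
      exact hmin' z (by linarith)
    obtain ⟨G, hG, h1, h2⟩ := bubble_step hV (hF.mono hV₀) hs₁ hs₁s hs hz₀ hmin' hq
      ((closedBall_subset_closedBall hrx).trans hball)
    refine ⟨G, hG, Set.union_subset ?_ ?_⟩
    · exact (hYs.trans (Set.image_mono ball_subset_closedBall)).trans h1
    · exact (closedBall_subset_closedBall (by linarith)).trans h2

end BallExhaustion

/-! ### Reaching finitely many balls in a connected open set -/

namespace BallExhaustion
open Filter Topology

variable {E : Type*} [NormedAddCommGroup E] [InnerProductSpace ℂ E] [FiniteDimensional ℂ E]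

/-- The points that can be swallowed together with `Y`, without entering the removed half-size
balls, form a relatively clopen set; by connectedness of `U` it reaches one of the balls
`ball (c i) (r i)`. -/
lemma exists_reach {ι : Type*} {c : ι → E} {r : ι → ℝ} {S : Finset ι} (hS : S.Nonempty)
    {U Y : Set E} (hU : IsOpen U) (hUc : IsPreconnected U) (hY : IsCompact Y) (hYne : Y.Nonempty)
    (hr : ∀ i ∈ S, 0 < r i) (hcU : ∀ i ∈ S, closedBall (c i) (r i) ⊆ U)
    (h : Swallows (U \ ⋃ i ∈ S, closedBall (c i) (r i / 2)) Y) :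
    ∃ b, ∃ i ∈ S, ‖b - c i‖ < r i ∧
      Swallows (U \ ⋃ i ∈ S, closedBall (c i) (r i / 2)) (Y ∪ {b}) := by
  set V := U \ ⋃ i ∈ S, closedBall (c i) (r i / 2) with hV_def
  have hV : IsOpen V := hU.sdiff (S.finite_toSet.isClosed_biUnion fun i _ => isClosed_closedBall)
  set B := {b | Swallows V (Y ∪ {b})} with hB
  have hBV : ∀ b ∈ B, b ∈ V := fun b hb => hb.subset (Or.inr rfl)
  -- points near a point of `V` are all in `B` or all outside
  have hloc : ∀ p ∈ V, ∃ η > 0, ∀ b ∈ B, ‖b - p‖ < η → ∀ b', ‖b' - p‖ < η → b' ∈ B := by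
    intro p hp
    obtain ⟨ε, hε, hεV⟩ := Metric.isOpen_iff.mp hV p hp
    refine ⟨ε / 4, by positivity, fun b hb hbp b' hb' => ?_⟩
    have h1 := Swallows.bubble hV subset_rfl (hY.union isCompact_singleton) hb (x := b) (q := b')
      (Or.inr rfl) (by
        refine Set.Subset.trans ?_ hεV
        intro w hw
        rw [mem_closedBall, dist_eq_norm] at hw
        rw [mem_ball, dist_eq_norm]
        have e1 : ‖b - b'‖ ≤ ‖b - p‖ + ‖b' - p‖ := by
          have : b - b' = (b - p) - (b' - p) := by abel
          rw [this]; exact norm_sub_le _ _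
        have e2 : ‖w - p‖ ≤ ‖w - b'‖ + ‖b' - p‖ := by
          have : w - p = (w - b') + (b' - p) := by abel
          rw [this]; exact norm_add_le _ _
        linarith) (d := 0) (fun w _ => norm_nonneg _)
    refine h1.mono subset_rfl (Set.union_subset (fun y hy => Or.inl (Or.inl hy)) ?_)
    rintro w rfl
    exact Or.inr (by simp)
  by_contra! hcon
  have hBo : IsOpen B := by
    rw [Metric.isOpen_iff]
    intro b hb
    obtain ⟨η, hη, h1⟩ := hloc b (hBV b hb)
    exact ⟨η, hη, fun b' hb' => h1 b hb (by simpa using hη) b' (by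
      rwa [mem_ball, dist_eq_norm] at hb')⟩
  have hBc : IsOpen (U \ B) := by
    rw [isOpen_iff_mem_nhds]
    rintro x ⟨hxU, hxB⟩
    by_cases hxV : x ∈ V
    · obtain ⟨η, hη, h1⟩ := hloc x hxV
      filter_upwards [ball_mem_nhds x hη, hU.mem_nhds hxU] with w hw hwU
      refine ⟨hwU, fun hwB => hxB (h1 w hwB (by rwa [mem_ball, dist_eq_norm] at hw) x ?_)⟩
      simpa using hη
    · have : x ∈ ⋃ i ∈ S, closedBall (c i) (r i / 2) := by
        by_contra h'
        exact hxV ⟨hxU, h'⟩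
      obtain ⟨i, hi, hxi⟩ := Set.mem_iUnion₂.mp this
      have hxi' : x ∈ ball (c i) (r i) :=
        closedBall_subset_ball (by linarith [hr i hi]) hxi
      filter_upwards [isOpen_ball.mem_nhds hxi'] with w hw
      refine ⟨hcU i hi (ball_subset_closedBall hw), fun hwB => ?_⟩
      exact hcon w i hi (by rwa [mem_ball, dist_eq_norm] at hw) hwB
  obtain ⟨y, hy⟩ := hYne
  obtain ⟨i, hi⟩ := hS
  have hyB : y ∈ B := h.mono subset_rfl (Set.union_subset subset_rfl (by simpa using hy))
  have hciB : c i ∉ B := fun hB => by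
    apply (hBV _ hB).2
    exact Set.mem_iUnion₂.mpr ⟨i, hi, mem_closedBall_self (by linarith [hr i hi])⟩
  have hciU : c i ∈ U := hcU i hi (mem_closedBall_self (hr i hi).le)
  obtain ⟨x, -, hx1, hx2⟩ := hUc B (U \ B) hBo hBc (fun x hx => by
    by_cases hxB : x ∈ B
    · exact Or.inl hxB
    · exact Or.inr ⟨hx, hxB⟩) ⟨y, (hBV y hyB).1, hyB⟩ ⟨c i, hciU, hciU, hciB⟩
  exact hx2.2 hx1

/-- Induction on the number of removed balls: reach a ball by `exists_reach`, put it back into the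
domain, and swallow its concentric `1/32`-shrinking by one bubble centred at `c i`. The half-size
ball was avoided so far, so the bubble has radius at least `r i / 2`, whence `1/2 · 1/16 = 1/32`. -/
lemma swallow_finset {ι : Type*} {c : ι → E} {r : ι → ℝ} {U : Set E} (hU : IsOpen U)
    (hUc : IsPreconnected U) (k : ℕ) : ∀ (S : Finset ι), S.card = k → ∀ (Y : Set E), IsCompact Y →
    Y.Nonempty → (∀ i ∈ S, 0 < r i) → (∀ i ∈ S, closedBall (c i) (r i) ⊆ U) →
    ((S : Set ι).PairwiseDisjoint fun i => closedBall (c i) (r i)) →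
    Swallows (U \ ⋃ i ∈ S, closedBall (c i) (r i / 2)) Y →
    Swallows U (Y ∪ ⋃ i ∈ S, closedBall (c i) (r i / 32)) := by
  classical
  have := FiniteDimensional.proper ℂ E
  induction k with
  | zero =>
    intro S hS Y _ _ _ _ _ h
    rw [Finset.card_eq_zero] at hS
    subst hS
    simpa using h
  | succ k ih =>
    intro S hS Y hY hYne hr hcU hdisj h
    have hSne : S.Nonempty := by rw [← Finset.card_pos]; omega
    obtain ⟨b, i, hi, hbi, hb⟩ := exists_reach hSne hU hUc hY hYne hr hcU h
    have hri := hr i hi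
    set V₀ := U \ ⋃ j ∈ S, closedBall (c j) (r j / 2) with hV₀
    have hV₀o : IsOpen V₀ :=
      hU.sdiff (S.finite_toSet.isClosed_biUnion fun i _ => isClosed_closedBall)
    have hsub : V₀ ∪ ball (c i) (r i) ⊆ U \ ⋃ j ∈ S.erase i, closedBall (c j) (r j / 2) := by
      rintro w (hw | hw)
      · refine ⟨hw.1, fun hw' => hw.2 ?_⟩
        obtain ⟨j, hj, hwj⟩ := Set.mem_iUnion₂.mp hw'
        exact Set.mem_iUnion₂.mpr ⟨j, Finset.mem_of_mem_erase hj, hwj⟩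
      · refine ⟨hcU i hi (ball_subset_closedBall hw), fun hw' => ?_⟩
        obtain ⟨j, hj, hwj⟩ := Set.mem_iUnion₂.mp hw'
        have hjS := Finset.mem_of_mem_erase hj
        exact Set.disjoint_left.mp (hdisj hi hjS (Finset.ne_of_mem_erase hj).symm)
          (ball_subset_closedBall hw)
          (closedBall_subset_closedBall (by linarith [hr j hjS]) hwj)
    have h1 := Swallows.bubble (hV₀o.union isOpen_ball) Set.subset_union_left
      (hY.union isCompact_singleton) hb (x := b) (q := c i) (Or.inr rfl)
      ((closedBall_subset_ball hbi).trans Set.subset_union_right) (d := r i / 2) (by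
        intro w hw
        by_contra! hlt
        refine hw.2 (Set.mem_iUnion₂.mpr ⟨i, hi, ?_⟩)
        rw [mem_closedBall, dist_eq_norm]; exact hlt.le)
    have h2 : Swallows (U \ ⋃ j ∈ S.erase i, closedBall (c j) (r j / 2))
        (Y ∪ closedBall (c i) (r i / 32)) := by
      refine h1.mono hsub (Set.union_subset (fun y hy => Or.inl (Or.inl hy)) ?_)
      refine Set.subset_union_of_subset_right (closedBall_subset_closedBall ?_) _
      linarith
    have h3 := ih (S.erase i) (by rw [Finset.card_erase_of_mem hi, hS]; rfl) _
      (hY.union (isCompact_closedBall _ _)) (hYne.mono Set.subset_union_left)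
      (fun j hj => hr j (Finset.mem_of_mem_erase hj))
      (fun j hj => hcU j (Finset.mem_of_mem_erase hj))
      (hdisj.subset (by exact_mod_cast Finset.erase_subset i S)) h2
    refine h3.mono subset_rfl ?_
    rintro w (hw | hw)
    · exact Or.inl (Or.inl hw)
    · obtain ⟨j, hj, hwj⟩ := Set.mem_iUnion₂.mp hw
      by_cases hji : j = i
      · subst hji; exact Or.inl (Or.inr hwj)
      · exact Or.inr (Set.mem_iUnion₂.mpr ⟨j, Finset.mem_erase.mpr ⟨hji, hj⟩, hwj⟩)

/-- The geometric step: from `F(closedBall 0 s)` to an image that also contains the concentric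
`1/32`-shrinkings of finitely many disjoint closed balls in the complement. -/
lemma geometric_step {ι : Type*} {c : ι → E} {r : ι → ℝ} {S : Finset ι} {U : Set E}
    (hU : IsOpen U) (hUc : IsPreconnected U) {F : E → E} (hF : Good U F) {s : ℝ} (hs0 : 0 < s)
    (hs1 : s < 1) (hr : ∀ i ∈ S, 0 < r i)
    (hcU : ∀ i ∈ S, closedBall (c i) (r i) ⊆ U \ F '' closedBall 0 s)
    (hdisj : (S : Set ι).PairwiseDisjoint fun i => closedBall (c i) (r i)) :
    ∃ G t, Good U G ∧ 0 < t ∧ t < 1 ∧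
      F '' closedBall 0 s ∪ ⋃ i ∈ S, closedBall (c i) (r i / 32) ⊆ G '' ball 0 t := by
  have := FiniteDimensional.proper ℂ E
  have hsub : closedBall (0 : E) s ⊆ ball 0 1 := closedBall_subset_ball hs1
  have hYc : IsCompact (F '' closedBall 0 s) :=
    (isCompact_closedBall 0 s).image_of_continuousOn (hF.1.continuousOn.mono hsub)
  have hYne : (F '' closedBall (0 : E) s).Nonempty := ⟨F 0, 0, by simpa using hs0.le, rfl⟩
  set O := U \ ⋃ i ∈ S, closedBall (c i) (r i / 2) with hO_def
  have hO : IsOpen O := hU.sdiff (S.finite_toSet.isClosed_biUnion fun i _ => isClosed_closedBall)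
  -- restricting `F` to a slightly larger ball keeps the image away from the balls
  have hstart : Swallows O (F '' closedBall 0 s) := by
    have hpre : IsOpen (ball (0 : E) 1 ∩ F ⁻¹' O) :=
      hF.1.continuousOn.isOpen_inter_preimage isOpen_ball hO
    obtain ⟨δ, hδ, hδO⟩ := (isCompact_closedBall (0 : E) s).exists_thickening_subset_open hpre (by
      intro z hz
      have hz1 := hsub hz
      refine ⟨hz1, hF.2.2 z (by simpa using hz1), fun hw => ?_⟩
      obtain ⟨i, hi, hwi⟩ := Set.mem_iUnion₂.mp hw
      exact (hcU i hi (closedBall_subset_closedBall (by linarith [hr i hi]) hwi)).2 ⟨z, hz, rfl⟩)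
    rw [thickening_closedBall hδ hs0.le] at hδO
    set t := s + min δ (1 - s) / 2 with ht
    have hm : 0 < min δ (1 - s) := lt_min hδ (by linarith)
    have hm1 := min_le_left δ (1 - s)
    have hm2 := min_le_right δ (1 - s)
    have ht0 : 0 < t := by linarith
    have ht1 : 1 ≤ 1 / t := by rw [le_div_iff₀ ht0]; linarith
    obtain ⟨hFd, ⟨c, hc, hFc⟩, -⟩ := hF
    refine ⟨fun z => F ((t : ℂ) • z), ⟨?_, ⟨c * t, mul_pos hc ht0, ?_⟩, ?_⟩, ?_⟩
    · exact (contDiffOn_comp_smul hFd ht0).mono (ball_subset_ball ht1)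
    · exact (hFc.comp_smul ht0).mono (ball_subset_ball ht1)
    · intro z hz
      refine (hδO (?_ : (t : ℂ) • z ∈ ball (0 : E) (δ + s))).2
      rw [mem_ball_zero_iff, norm_real_smul ht0]
      nlinarith
    · apply image_comp_smul ht0
      intro z hz
      rw [mem_closedBall_zero_iff] at hz
      rw [mem_ball_zero_iff, norm_inv_real_smul ht0, div_lt_one ht0]
      linarith
  obtain ⟨G, hG, hGY⟩ := swallow_finset hU hUc _ S rfl _ hYc hYne hr
    (fun i hi => (hcU i hi).trans Set.sdiff_subset) hdisj hstart
  obtain ⟨t, ht0, ht1, h⟩ := hG.exists_radius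
    (hYc.union (S.finite_toSet.isCompact_biUnion fun i _ => isCompact_closedBall _ _)) hGY
  exact ⟨G, t, hG, ht0, ht1, h⟩

end BallExhaustion

/-! ### Volumes -/

namespace BallExhaustion

/-- By Besicovitch's covering theorem almost all of `O` is filled by disjoint closed balls; finitely
many of them fill half of `O`, and shrinking these by `32` costs the factor `32 ^ dim`. -/
lemma exists_finset_closedBall {E : Type*} [NormedAddCommGroup E] [NormedSpace ℝ E]
    [FiniteDimensional ℝ E] [MeasurableSpace E] [BorelSpace E] (μ : Measure E)
    [μ.IsAddHaarMeasure] {O : Set E} (hO : IsOpen O) (hfin : μ O ≠ ⊤) :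
    ∃ (S : Finset E) (r : E → ℝ), (∀ x ∈ S, 0 < r x) ∧ (∀ x ∈ S, closedBall x (r x) ⊆ O) ∧
      (S : Set E).PairwiseDisjoint (fun x => closedBall x (r x)) ∧
      μ.real O / (2 * 32 ^ Module.finrank ℝ E) ≤
        μ.real (⋃ x ∈ S, closedBall x (r x / 32)) := by
  obtain ⟨t, r, htc, -, htr, hμ, hdisj⟩ :=
    Besicovitch.exists_disjoint_closedBall_covering_ae μ
      (fun x => {ρ | closedBall x ρ ⊆ O}) O (fun x hx δ hδ => by
        obtain ⟨ε, hε, hεO⟩ := Metric.nhds_basis_closedBall.mem_iff.mp (hO.mem_nhds hx)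
        exact ⟨min ε (δ / 2), (closedBall_subset_closedBall (min_le_left _ _)).trans hεO,
          lt_min hε (half_pos hδ), (min_le_right _ _).trans_lt (half_lt_self hδ)⟩)
      (fun _ => 1) (fun _ _ => one_pos)
  have hle : μ O ≤ ∑' x : t, μ (closedBall (x : E) (r x)) := by
    rw [← measure_biUnion htc hdisj fun x _ => isClosed_closedBall.measurableSet]
    exact measure_mono_ae (ae_le_set.mpr hμ)
  obtain hz | hz := eq_or_ne (μ O) 0
  · exact ⟨∅, r, by simp, by simp, by simp, by simp [Measure.real, hz]⟩
  have hlt : μ O / 2 < ∑' x : t, μ (closedBall (x : E) (r x)) :=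
    (ENNReal.half_lt_self hz hfin).trans_le hle
  rw [ENNReal.tsum_eq_iSup_sum, lt_iSup_iff] at hlt
  obtain ⟨T, hT⟩ := hlt
  set S : Finset E := T.map (Function.Embedding.subtype _) with hS
  have hSt : ∀ x ∈ S, x ∈ t := by
    intro x hx
    obtain ⟨y, -, rfl⟩ := Finset.mem_map.mp hx
    exact y.2
  have hSsum : ∑ x ∈ T, μ (closedBall (x : E) (r x)) = ∑ x ∈ S, μ (closedBall x (r x)) := by
    rw [hS, Finset.sum_map]; rfl
  rw [hSsum] at hT
  have hpos : ∀ x ∈ S, 0 < r x := fun x hx => (htr x (hSt x hx)).2.1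
  have hdS : (S : Set E).PairwiseDisjoint (fun x => closedBall x (r x)) :=
    hdisj.subset fun x hx => hSt x hx
  refine ⟨S, r, hpos, fun x hx => (htr x (hSt x hx)).1, hdS, ?_⟩
  have hreal : μ.real O / 2 ≤ ∑ x ∈ S, μ.real (closedBall x (r x)) := by
    have h1 := ENNReal.toReal_mono
      (ENNReal.sum_ne_top.mpr fun x _ => measure_closedBall_lt_top.ne) hT.le
    rw [ENNReal.toReal_sum fun x _ => measure_closedBall_lt_top.ne, ENNReal.toReal_div] at h1
    exact h1
  have hscale : ∀ x ∈ S, μ.real (closedBall x (r x / 32)) =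
      μ.real (closedBall x (r x)) / 32 ^ Module.finrank ℝ E := by
    intro x hx
    have := hpos x hx
    rw [Measure.real, Measure.real, Measure.addHaar_closedBall μ x (by positivity),
      Measure.addHaar_closedBall μ x this.le, ENNReal.toReal_mul, ENNReal.toReal_mul,
      ENNReal.toReal_ofReal (by positivity), ENNReal.toReal_ofReal (by positivity), div_pow]
    ring
  have hdS' : (S : Set E).PairwiseDisjoint (fun x => closedBall x (r x / 32)) :=
    fun x hx y hy hxy => (hdS hx hy hxy).mono
      (closedBall_subset_closedBall (by have := hpos x hx; linarith))
      (closedBall_subset_closedBall (by have := hpos y hy; linarith))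
  rw [measureReal_biUnion_finset hdS' (fun x _ => isClosed_closedBall.measurableSet)
    (fun x _ => measure_closedBall_lt_top.ne), Finset.sum_congr rfl hscale, ← Finset.sum_div,
    ← div_div]
  gcongr

/-- One step of the exhaustion. It gains the fraction `1 / (2 · 32 ^ dim)` of the missing volume,
which beats `ρ / (3 · 32 ^ dim)` because `ρ ≤ 1`. -/
lemma volume_step {E : Type*} [NormedAddCommGroup E] [InnerProductSpace ℂ E]
    [FiniteDimensional ℂ E] [NormedSpace ℝ E] [FiniteDimensional ℝ E] [MeasurableSpace E]
    [BorelSpace E] (μ : Measure E) [μ.IsAddHaarMeasure] {U : Set E} (hU : IsOpen U)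
    (hUc : IsPreconnected U) (hfin : μ U ≠ ⊤) {F : E → E} (hF : Good U F) {s : ℝ} (hs0 : 0 < s)
    (hs1 : s < 1) :
    ∃ G t, Good U G ∧ 0 < t ∧ t < 1 ∧ F '' ball 0 s ⊆ G '' ball 0 t ∧
      μ.real (F '' ball 0 s) +
        (μ.real U - μ.real (F '' ball 0 s)) / (2 * 32 ^ Module.finrank ℝ E) ≤
          μ.real (G '' ball 0 t) := by
  have := FiniteDimensional.proper ℂ E
  set Y := F '' closedBall 0 s with hYdef
  have hsub : closedBall (0 : E) s ⊆ ball 0 1 := closedBall_subset_ball hs1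
  have hY : IsCompact Y := (isCompact_closedBall _ _).image_of_continuousOn
    (hF.1.continuousOn.mono hsub)
  have hYU : Y ⊆ U := by
    rintro _ ⟨z, hz, rfl⟩
    exact hF.2.2 z (by simpa using hsub hz)
  have hYm : MeasurableSet Y := hY.isClosed.measurableSet
  obtain ⟨S, r, hr, hrO, hdisj, hvol⟩ := exists_finset_closedBall μ (hU.sdiff hY.isClosed)
    ((measure_mono Set.sdiff_subset).trans_lt hfin.lt_top).ne
  obtain ⟨G, t, hG, ht0, ht1, hGt⟩ :=
    geometric_step (c := fun x => x) hU hUc hF hs0 hs1 hr hrO hdisj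
  have hFY : F '' ball 0 s ⊆ Y := Set.image_mono ball_subset_closedBall
  refine ⟨G, t, hG, ht0, ht1, hFY.trans (Set.subset_union_left.trans hGt), ?_⟩
  have hGU : G '' ball 0 t ⊆ U := by
    rintro _ ⟨z, hz, rfl⟩
    exact hG.2.2 z ((mem_ball_zero_iff.mp hz).trans ht1)
  have hft : ∀ A ⊆ U, μ A ≠ ⊤ := fun A hA => ((measure_mono hA).trans_lt hfin.lt_top).ne
  have hBO : (⋃ i ∈ S, closedBall i (r i / 32)) ⊆ U \ Y := Set.iUnion₂_subset fun i hi =>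
    (closedBall_subset_closedBall (by have := hr i hi; linarith)).trans (hrO i hi)
  have h1 : μ.real Y + μ.real (⋃ i ∈ S, closedBall i (r i / 32)) ≤ μ.real (G '' ball 0 t) := by
    rw [← measureReal_union (Set.disjoint_left.mpr fun x hx hx' => (hBO hx').2 hx)
      (S.measurableSet_biUnion fun i _ => isClosed_closedBall.measurableSet) (hft _ hYU)
      (hft _ (hBO.trans Set.sdiff_subset))]
    exact measureReal_mono hGt (hft _ hGU)
  have h2 : μ.real (U \ Y) = μ.real U - μ.real Y := measureReal_sdiff hYU hYm (hft _ subset_rfl)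
  have h3 : μ.real (F '' ball 0 s) ≤ μ.real Y := measureReal_mono hFY (hft _ hYU)
  have h4 : (μ.real Y - μ.real (F '' ball 0 s)) / (2 * 32 ^ Module.finrank ℝ E) ≤
      μ.real Y - μ.real (F '' ball 0 s) :=
    div_le_self (by linarith) (by
      have : (1 : ℝ) ≤ 32 ^ Module.finrank ℝ E := one_le_pow₀ (by norm_num)
      linarith)
  rw [h2] at hvol
  have h5 : (μ.real U - μ.real (F '' ball 0 s)) / (2 * 32 ^ Module.finrank ℝ E) =
      (μ.real U - μ.real Y) / (2 * 32 ^ Module.finrank ℝ E) +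
      (μ.real Y - μ.real (F '' ball 0 s)) / (2 * 32 ^ Module.finrank ℝ E) := by ring
  linarith

lemma exists_good {E : Type*} [NormedAddCommGroup E] [InnerProductSpace ℂ E] {U : Set E}
    (hU : IsOpen U) (hne : U.Nonempty) : ∃ F, Good U F := by
  obtain ⟨x, hx⟩ := hne
  obtain ⟨η, hη, hηU⟩ := Metric.isOpen_iff.mp hU x hx
  refine ⟨fun z => x + (η : ℂ) • z, ?_, ⟨η, hη, fun a _ b _ => ?_⟩, fun z hz => hηU ?_⟩
  · exact (contDiff_const.add (contDiff_id.const_smul (η : ℂ))).contDiffOn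
  · rw [add_sub_add_left_eq_sub, ← smul_sub, norm_smul, Complex.norm_real,
      Real.norm_of_nonneg hη.le]
  · rw [mem_ball, dist_eq_norm, add_sub_cancel_left, norm_smul, Complex.norm_real,
      Real.norm_of_nonneg hη.le]
    nlinarith

lemma finrank_real (m : ℕ) : Module.finrank ℝ (EuclideanSpace ℂ (Fin m)) = 2 * m := by
  have := finrank_real_of_complex (EuclideanSpace ℂ (Fin m))
  rw [finrank_euclideanSpace_fin] at this
  exact this

lemma rhoConst_le_one (m : ℕ) : rhoConst m ≤ 1 := by
  rcases Nat.eq_zero_or_pos m with rfl | hm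
  · -- in dimension zero the ball is the whole space, which is also the unit parallelepiped
    set b := stdOrthonormalBasis ℝ (EuclideanSpace ℂ (Fin 0))
    have h1 : volume (ball (0 : EuclideanSpace ℂ (Fin 0)) (1 / 2)) ≤
        volume (parallelepiped b) := measure_mono fun x _ => by
      rw [Subsingleton.elim x 0, mem_parallelepiped_iff]
      exact ⟨0, by simp, by simp⟩
    rw [b.volume_parallelepiped] at h1
    exact ENNReal.toReal_mono ENNReal.one_ne_top h1
  · have : Nonempty (Fin m) := ⟨⟨0, hm⟩⟩
    rw [rhoConst, InnerProductSpace.volume_ball_of_dim_even (k := m) (finrank_real m), finrank_real,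
      ENNReal.toReal_mul, ENNReal.toReal_pow, ENNReal.toReal_ofReal (by norm_num),
      ENNReal.toReal_ofReal (by positivity), pow_mul]
    have h2 : ((1 / 2 : ℝ) ^ 2) ^ m * (Real.pi ^ m / m.factorial) =
        (Real.pi / 4) ^ m / m.factorial := by
      rw [← mul_div_assoc, ← mul_pow]; ring_nf
    rw [h2]
    have h3 : (Real.pi / 4) ^ m ≤ 1 :=
      pow_le_one₀ (by positivity) (by linarith [Real.pi_le_four])
    exact div_le_one_of_le₀ (h3.trans (by exact_mod_cast m.factorial_pos)) (by positivity)

end BallExhaustion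

open BallExhaustion in
/-- **Corollary 2.5.** For a bounded connected open set `U ⊆ ℂ^m` there are injective
holomorphic maps `F_j : B^m(0,1) → U` and numbers `0 < s_j < 1` with
`F_{j+1}(B^m(0,s_{j+1})) ⊇ F_j(B^m(0,s_j))` and
`vol(F_{j+1}(B^m(0,s_{j+1}))) ≥ vol(F_j(B^m(0,s_j))) +
  ρ_m/(3·32^{2m})·(vol U − vol(F_j(B^m(0,s_j))))` for all `j`. -/
theorem exists_increasing_ball_images_volume_step {m : ℕ}
    (U : Set (EuclideanSpace ℂ (Fin m))) (hUopen : IsOpen U) (hUconn : IsConnected U)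
    (hUbdd : Bornology.IsBounded U) :
    ∃ (F : ℕ → EuclideanSpace ℂ (Fin m) → EuclideanSpace ℂ (Fin m)) (s : ℕ → ℝ),
      (∀ j, DifferentiableOn ℂ (F j) (ball 0 1)) ∧
      (∀ j, Set.InjOn (F j) (ball 0 1)) ∧
      (∀ j, F j '' ball 0 1 ⊆ U) ∧
      (∀ j, 0 < s j ∧ s j < 1) ∧
      (∀ j, F j '' ball 0 (s j) ⊆ F (j + 1) '' ball 0 (s (j + 1))) ∧
      (∀ j, (volume (F (j + 1) '' ball 0 (s (j + 1)))).toReal ≥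
        (volume (F j '' ball 0 (s j))).toReal +
          rhoConst m / (3 * 32 ^ (2 * m)) *
            ((volume U).toReal - (volume (F j '' ball 0 (s j))).toReal)) := by
  have hfin : volume U ≠ ⊤ := hUbdd.measure_lt_top.ne
  let P := {p : (EuclideanSpace ℂ (Fin m) → EuclideanSpace ℂ (Fin m)) × ℝ //
    Good U p.1 ∧ 0 < p.2 ∧ p.2 < 1}
  have hstep : ∀ p : P, ∃ q : P, p.1.1 '' ball 0 p.1.2 ⊆ q.1.1 '' ball 0 q.1.2 ∧
      (volume (p.1.1 '' ball 0 p.1.2)).toReal + ((volume U).toReal -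
        (volume (p.1.1 '' ball 0 p.1.2)).toReal) / (2 * 32 ^ (2 * m)) ≤
        (volume (q.1.1 '' ball 0 q.1.2)).toReal := by
    rintro ⟨⟨F, s⟩, hF, hs0, hs1⟩
    obtain ⟨G, t, hG, ht0, ht1, hsub, hvol⟩ :=
      volume_step volume hUopen hUconn.isPreconnected hfin hF hs0 hs1
    rw [finrank_real] at hvol
    exact ⟨⟨(G, t), hG, ht0, ht1⟩, hsub, hvol⟩
  choose next hnext hvol using hstep
  obtain ⟨F₀, hF₀⟩ := exists_good hUopen hUconn.nonempty
  let p : ℕ → P := fun j => next^[j] ⟨(F₀, 1 / 2), hF₀, by norm_num, by norm_num⟩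
  have hp : ∀ j, p (j + 1) = next (p j) := fun j => Function.iterate_succ_apply' next j _
  refine ⟨fun j => (p j).1.1, fun j => (p j).1.2,
    fun j => (p j).2.1.1.differentiableOn one_ne_zero,
    fun j => by obtain ⟨c, hc, h⟩ := (p j).2.1.2.1; exact h.injOn hc, ?_, fun j => (p j).2.2,
    fun j => by dsimp only; rw [hp]; exact hnext _, fun j => ?_⟩
  · rintro j _ ⟨z, hz, rfl⟩
    exact (p j).2.1.2.2 z (mem_ball_zero_iff.mp hz)
  · dsimp only
    rw [hp]
    refine le_trans ?_ (hvol (p j))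
    have hle : (volume ((p j).1.1 '' ball 0 (p j).1.2)).toReal ≤ (volume U).toReal := by
      refine ENNReal.toReal_mono hfin (measure_mono ?_)
      rintro _ ⟨z, hz, rfl⟩
      exact (p j).2.1.2.2 z ((mem_ball_zero_iff.mp hz).trans (p j).2.2.2)
    rw [div_eq_mul_inv (_ - _), mul_comm (_ - _)]
    refine add_le_add_right (mul_le_mul_of_nonneg_right ?_ (by linarith)) _
    rw [div_le_iff₀ (by positivity), mul_inv]
    have h32 : ((32 : ℝ) ^ (2 * m))⁻¹ * 32 ^ (2 * m) = 1 := inv_mul_cancel₀ (by positivity)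
    linear_combination rhoConst_le_one m - 3 / 2 * h32
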